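/- arXiv:2104.13222 — 5 statements merged into one kernel-verified Lean document; each statement's English description precedes it below -/
import Mathlib

section
/- Let F be a family of finite simple graphs and let K(F) denote the class of all finite F-free graphs. If there exists a countable F-free graph U such that every countable F-free graph admits a graph embedding into U, then K(F) has the weak amalgamation property. -/
open SimpleGraph

/-- `A` is contained in `G`: there is an injective graph homomorphism from `A` to `G`. -/
def Contains {V W : Type} (A : SimpleGraph V) (G : SimpleGraph W) : Prop :=
  ∃ f : A →g G, Function.Injective f

/-- The class of finite graphs satisfying `P` has the weak amalgamation property (WAP):
for every finite `A` with `P A` there are a finite `A'` with `P A'` and a graph embedding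
`i : A ↪g A'` such that any two finite extensions `B`, `C` of `A'` in the class
amalgamate over (the image of) `A`. -/
def GraphWAP (P : ∀ α : Type, SimpleGraph α → Prop) : Prop :=
  ∀ (α : Type) [Fintype α], ∀ A : SimpleGraph α, P α A →
    ∃ (β : Type) (_ : Fintype β) (A' : SimpleGraph β) (i : A ↪g A'), P β A' ∧
      ∀ (γ : Type) [Fintype γ], ∀ B : SimpleGraph γ, P γ B →
        ∀ (δ : Type) [Fintype δ], ∀ C : SimpleGraph δ, P δ C →
          ∀ (f : A' ↪g B) (g : A' ↪g C),
            ∃ (ε : Type) (_ : Fintype ε) (D : SimpleGraph ε), P ε D ∧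
              ∃ (f' : B ↪g D) (g' : C ↪g D),
                ∀ a : α, f' (f (i a)) = g' (g (i a))

/-!
A finite member `A` of the class has a finite extension `A'` and a map `h` from `A` to `U` such that
every further finite extension of `A'` embeds into `U` over `h`. Otherwise every finite extension of
`A` could be extended so as to rule out any given map `h`; as there are only countably many, a chain
of finite extensions rules them out one after the other, yet the union of the chain is a countable
member of the class and embeds into `U`, inducing some map on `A`. Two extensions of `A'` are then
amalgamated over `A` by the union of their images in `U`.
-/

section DirectLimit

variable {ι : Type*} [Preorder ι] [IsDirectedOrder ι] {X : ι → Type*} {G : ∀ i, SimpleGraph (X i)}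
  (f : ∀ i j, i ≤ j → G i ↪g G j) [DirectedSystem X (f · · ·)]

/-- The direct limit of a directed system of graphs and graph embeddings, as a graph on the direct
limit of the vertex types. -/
noncomputable def directLimitGraph : SimpleGraph (DirectLimit X f) where
  Adj := DirectLimit.lift₂ f f (fun i ↦ (G i).Adj) fun i j h _ _ ↦
    propext (f i j h).map_adj_iff.symm
  symm.symm := DirectLimit.induction₂ f fun i x y h ↦ by
    rw [DirectLimit.lift₂_def] at h ⊢
    exact h.symm
  loopless.irrefl := DirectLimit.induction f fun i x h ↦ by
    rw [DirectLimit.lift₂_def] at h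
    exact h.ne rfl

theorem directLimitGraph.adj_mk (i : ι) (x y : X i) :
    (directLimitGraph f).Adj ⟦⟨i, x⟩⟧ ⟦⟨i, y⟩⟧ ↔ (G i).Adj x y := by
  simp only [directLimitGraph, DirectLimit.lift₂_def]

/-- The canonical embedding of the `i`-th graph of a directed system into the direct limit. -/
noncomputable def directLimitGraph.of (i : ι) : G i ↪g directLimitGraph f where
  toFun x := ⟦⟨i, x⟩⟧
  inj' := DirectLimit.mk_injective f (fun i j h ↦ (f i j h).injective) i
  map_rel_iff' {x y} := adj_mk f i x y

theorem directLimitGraph.of_apply (i : ι) (x : X i) : of f i x = ⟦⟨i, x⟩⟧ :=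
  rfl

theorem directLimitGraph.of_map {i j : ι} (h : i ≤ j) (x : X i) :
    of f j (f i j h x) = of f i x :=
  DirectLimit.mk_apply (f := f) i j x h

theorem directLimitGraph.exists_subset_range_of [Nonempty ι] {s : Set (DirectLimit X f)}
    (hs : s.Finite) : ∃ i, s ⊆ Set.range (of f i) := by
  have range_mono : Monotone fun i ↦ Set.range (of f i) := by
    rintro i j h _ ⟨x, rfl⟩
    exact ⟨f i j h x, of_map f h x⟩
  have range_cover : s ⊆ ⋃ i, Set.range (of f i) := fun z _ ↦ by
    obtain ⟨i, x, rfl⟩ := DirectLimit.exists_eq_mk f z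
    exact Set.mem_iUnion_of_mem i ⟨x, of_apply f i x⟩
  lift s to Finset (DirectLimit X f) using hs
  exact range_mono.directed_le.exists_mem_subset_of_finset_subset_biUnion range_cover

end DirectLimit

section Chain

variable {X : ℕ → Type*} {G : ∀ n, SimpleGraph (X n)} (f : ∀ n, G n ↪g G (n + 1))

/-- The composite embeddings `G m ↪g G n` along a chain of graph embeddings. -/
def chainEmbedding (m n : ℕ) (h : m ≤ n) : G m ↪g G n :=
  Nat.leRecOn h (fun {k} g ↦ (f k).comp g) SimpleGraph.Embedding.refl

theorem chainEmbedding_self (n : ℕ) (x : X n) : chainEmbedding f n n le_rfl x = x := by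
  rw [chainEmbedding, Nat.leRecOn_self]
  rfl

theorem chainEmbedding_succ {m n : ℕ} (h : m ≤ n) (x : X m) :
    chainEmbedding f m (n + 1) (h.trans n.le_succ) x = f n (chainEmbedding f m n h x) := by
  rw [chainEmbedding, Nat.leRecOn_succ h]
  rfl

instance chainEmbedding.directedSystem : DirectedSystem X (chainEmbedding f · · ·) where
  map_self n x := chainEmbedding_self f n x
  map_map n m k hkm hmn x := by
    induction n, hmn using Nat.le_induction with
    | base => rw [chainEmbedding_self]
    | succ n hmn ih => rw [chainEmbedding_succ f hmn, ih, chainEmbedding_succ]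

end Chain

/-- A class of graphs is hereditary if it is closed under induced subgraphs and isomorphism. -/
def IsHereditary (P : ∀ α : Type, SimpleGraph α → Prop) : Prop :=
  ∀ ⦃α β : Type⦄ ⦃G : SimpleGraph α⦄ ⦃H : SimpleGraph β⦄, (G ↪g H) → P β H → P α G

/-- A class of graphs is finitary if a graph belongs to it as soon as all finite induced subgraphs
do. -/
def IsFinitary (P : ∀ α : Type, SimpleGraph α → Prop) : Prop :=
  ∀ ⦃α : Type⦄ ⦃G : SimpleGraph α⦄, (∀ s : Set α, s.Finite → P s (G.induce s)) → P α G

/-- A finite graph `graph` of the class `P` with an embedding `incl` of `A`: a candidate for the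
witness `A'` of weak amalgamation, and a stage of the chains used to find one. -/
structure FiniteExtension (P : ∀ α : Type, SimpleGraph α → Prop) {α : Type}
    (A : SimpleGraph α) where
  carrier : Type
  [finite : Finite carrier]
  graph : SimpleGraph carrier
  mem : P carrier graph
  incl : A ↪g graph

attribute [instance] FiniteExtension.finite

section Amalgamation

variable {P : ∀ α : Type, SimpleGraph α → Prop}

theorem IsHereditary.mem_directLimitGraph (hered : IsHereditary P) (finit : IsFinitary P) {ι : Type}
    [Preorder ι] [IsDirectedOrder ι] [Nonempty ι] {X : ι → Type} {G : ∀ i, SimpleGraph (X i)}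
    (f : ∀ i j, i ≤ j → G i ↪g G j) [DirectedSystem X (f · · ·)] (hG : ∀ i, P (X i) (G i)) :
    P (DirectLimit X f) (directLimitGraph f) :=
  finit fun _ hs ↦
    have ⟨i, hi⟩ := directLimitGraph.exists_subset_range_of f hs
    hered ((directLimitGraph.of f i).isoInduceRange.symm.toEmbedding.comp
      ((directLimitGraph f).induceHomOfLE hi)) (hG i)

theorem IsHereditary.exists_finite_amalgam (hered : IsHereditary P) {W : Type} {U : SimpleGraph W}
    (hU : P W U) {β γ : Type} [Finite β] [Finite γ] {B : SimpleGraph β} {C : SimpleGraph γ}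
    (u : B ↪g U) (v : C ↪g U) :
    ∃ (δ : Type) (_ : Finite δ) (D : SimpleGraph δ), P δ D ∧
      ∃ (f : B ↪g D) (g : C ↪g D), ∀ b c, u b = v c → f b = g c :=
  ⟨↥(Set.range u ∪ Set.range v), inferInstance, U.induce _, hered (.induce _) hU,
    (U.induceHomOfLE Set.subset_union_left).comp u.isoInduceRange.toEmbedding,
    (U.induceHomOfLE Set.subset_union_right).comp v.isoInduceRange.toEmbedding,
    fun _ _ h ↦ Subtype.ext h⟩

theorem FiniteExtension.exists_countable_colimit (hered : IsHereditary P) (finit : IsFinitary P)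
    {α : Type} {A : SimpleGraph α} (E : ℕ → FiniteExtension P A)
    (f : ∀ n, (E n).graph ↪g (E (n + 1)).graph) (hf : ∀ n, f n ∘ (E n).incl = (E (n + 1)).incl) :
    ∃ (X : Type) (_ : Countable X) (N : SimpleGraph X), P X N ∧
      ∃ (j : A ↪g N) (c : ∀ n, (E n).graph ↪g N), ∀ n, c n ∘ (E n).incl = j := by
  let c := directLimitGraph.of (chainEmbedding f)
  have c_succ (n : ℕ) : c (n + 1) ∘ f n = c n := by
    funext x
    rw [← directLimitGraph.of_map (chainEmbedding f) n.le_succ, chainEmbedding_succ f le_rfl,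
      chainEmbedding_self]
    rfl
  refine ⟨_, inferInstance, directLimitGraph (chainEmbedding f),
    hered.mem_directLimitGraph finit (chainEmbedding f) fun n ↦ (E n).mem,
    (c 0).comp (E 0).incl, c, fun n ↦ ?_⟩
  induction n with
  | zero => rfl
  | succ n ih => rw [← hf, ← Function.comp_assoc, c_succ, ih]

theorem IsHereditary.exists_countable_omitting (hered : IsHereditary P) (finit : IsFinitary P)
    {α W : Type} [Finite α] {A : SimpleGraph α} (hA : P α A) {U : SimpleGraph W} (h : ℕ → α → W)
    (avoidable : ∀ (n : ℕ) (E : FiniteExtension P A), ∃ (E' : FiniteExtension P A)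
      (f : E.graph ↪g E'.graph), f ∘ E.incl = E'.incl ∧
        ∀ e : E'.graph ↪g U, e ∘ E'.incl ≠ h n) :
    ∃ (X : Type) (_ : Countable X) (N : SimpleGraph X), P X N ∧
      ∃ j : A ↪g N, ∀ (e : N ↪g U) (n : ℕ), e ∘ j ≠ h n := by
  choose next f hf omitted using avoidable
  let E (n : ℕ) : FiniteExtension P A := Nat.rec ⟨α, A, hA, .refl⟩ next n
  obtain ⟨X, countable, N, hN, j, c, hc⟩ := FiniteExtension.exists_countable_colimit hered finit E
    (fun n ↦ f n (E n)) fun n ↦ hf n (E n)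
  refine ⟨X, countable, N, hN, j, fun e n he ↦ omitted n (E n) (e.comp (c (n + 1))) ?_⟩
  rw [← he, ← hc (n + 1)]
  rfl

theorem IsHereditary.exists_forall_extends (hered : IsHereditary P) (finit : IsFinitary P)
    {W : Type} [Countable W] {U : SimpleGraph W}
    (hUniv : ∀ (X : Type) (N : SimpleGraph X), Countable X → P X N → Nonempty (N ↪g U))
    {α : Type} [Finite α] {A : SimpleGraph α} (hA : P α A) :
    ∃ (E : FiniteExtension P A) (h : α → W), ∀ (γ : Type) [Finite γ] (B : SimpleGraph γ), P γ B →
      ∀ f : E.graph ↪g B, ∃ e : B ↪g U, e ∘ f ∘ E.incl = h := by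
  by_contra! avoidable
  obtain ⟨u⟩ := hUniv α A inferInstance hA
  have : Nonempty (α → W) := ⟨u⟩
  obtain ⟨h, h_surj⟩ := exists_surjective_nat (α → W)
  obtain ⟨X, countable, N, hN, j, hj⟩ := hered.exists_countable_omitting finit hA (U := U) h
    fun n E ↦
      have ⟨γ, _, B, hB, f, hf⟩ := avoidable E (h n)
      ⟨⟨γ, B, hB, f.comp E.incl⟩, f, rfl, hf⟩
  obtain ⟨e⟩ := hUniv X N countable hN
  obtain ⟨n, hn⟩ := h_surj (e ∘ j)
  exact hj e n hn.symm

theorem graph_wap_of_universal_general (hered : IsHereditary P) (finit : IsFinitary P)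
    {W : Type} [Countable W] {U : SimpleGraph W} (hU : P W U)
    (hUniv : ∀ (X : Type) (N : SimpleGraph X), Countable X → P X N → Nonempty (N ↪g U)) :
    GraphWAP P := by
  intro α _ A hA
  obtain ⟨E, h, extends_h⟩ := hered.exists_forall_extends finit hUniv hA
  refine ⟨E.carrier, .ofFinite _, E.graph, E.incl, E.mem, fun β _ B hB γ _ C hC f g ↦ ?_⟩
  obtain ⟨u, hu⟩ := extends_h β B hB f
  obtain ⟨v, hv⟩ := extends_h γ C hC g
  obtain ⟨δ, _, D, hD, f', g', amalgam⟩ := hered.exists_finite_amalgam hU u v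
  exact ⟨δ, .ofFinite δ, D, hD, f', g', fun a ↦ amalgam _ _ (congrFun (hu.trans hv.symm) a)⟩

end Amalgamation

section Free

variable {ι : Type*} {V : ι → Type} (F : ∀ i, SimpleGraph (V i))

theorem isHereditary_free : IsHereditary fun _ G ↦ ∀ i, ¬ Contains (F i) G :=
  fun _ _ _ _ e hfree i ⟨f, hf⟩ ↦ hfree i ⟨e.toHom.comp f, e.injective.comp hf⟩

theorem isFinitary_free [∀ i, Finite (V i)] : IsFinitary fun _ G ↦ ∀ i, ¬ Contains (F i) G :=
  fun _ _ hfree i ⟨f, hf⟩ ↦ hfree (Set.range f) (Set.finite_range f) i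
    ⟨⟨Set.rangeFactorization f, f.map_adj⟩, Set.rangeFactorization_injective.mpr hf⟩

end Free

/-- If there is a countable `F`-free graph `U` into which every countable `F`-free graph
embeds, then the class of all finite `F`-free graphs has the weak amalgamation property. -/
theorem graph_wap_of_universal (ι : Type) (V : ι → Type) (hVfin : ∀ i, Finite (V i))
    (F : ∀ i, SimpleGraph (V i))
    (W : Type) (hW : Countable W) (U : SimpleGraph W)
    (hUfree : ∀ i, ¬ Contains (F i) U)
    (hUniv : ∀ (X : Type) (N : SimpleGraph X), Countable X →
      (∀ i, ¬ Contains (F i) N) → Nonempty (N ↪g U)) :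
    GraphWAP (fun _ G => ∀ i, ¬ Contains (F i) G) :=
  graph_wap_of_universal_general (isHereditary_free F) (isFinitary_free F) hUfree hUniv
end

section
/- Let H be the windmill graph Wd(3,3), the graph on 7 vertices consisting of three triangles all sharing exactly one common vertex. Then the class K(H) of all finite H-free graphs has the weak amalgamation property. -/
open SimpleGraph

/-- The windmill graph `Wd(3,3)`: three triangles sharing the common vertex `0`,
with triangles `{0,1,2}`, `{0,3,4}`, `{0,5,6}`. -/
def windmill : SimpleGraph (Fin 7) :=
  SimpleGraph.fromRel fun a b =>
    a = 0 ∨ (a = 1 ∧ b = 2) ∨ (a = 3 ∧ b = 4) ∨ (a = 5 ∧ b = 6)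

/-!
Write a triangle at a vertex `c` as the set of its two other vertices; a graph omits the friendship
graph with `n + 1` triangles iff no vertex carries `n + 1` pairwise disjoint triangles.

The obstruction to amalgamating two extensions freely over `A` is a vertex of `A` whose triangles
come from both sides. To control them, enlarge `A` to a *core* `E` with a subgraph `F` of *heavy*
edges. Each heavy edge gets three private common neighbours (its hats), so it supports a triangle
that meets the core in that edge only, and a heavy edge at `c` counts as a triangle `{x}` at `c`.
If every vertex carries `n` disjoint such objects but none carries `n + 1`, and `F` is maximal,
then in every extension omitting the friendship graph, each triangle at a core vertex contains a
core triangle or a heavy edge. The free amalgam over the core inherits this property, so its fans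
at core vertices project to fans in the core. To bring every vertex up to `n` objects, pass
repeatedly to the prism, with fibres heavy over exactly the vertices that carry fewer than `n`.
-/

universe u

section Fan

variable {V W : Type*} {n m : ℕ}

/-- The blades at `c` of a graph `E` with heavy edges `F`: a triangle of `E` at `c` is recorded as
the set of its other two vertices, a heavy edge at `c` as its other endpoint. For `F = ⊥` these are
the triangles at `c`. -/
inductive IsBlade (E F : SimpleGraph W) (c : W) : Set W → Prop
  | heavy {x : W} (hx : F.Adj c x) : IsBlade E F c {x}
  | triangle {x y : W} (hx : E.Adj c x) (hy : E.Adj c y) (hxy : E.Adj x y) : IsBlade E F c {x, y}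

/-- A fan at `c`: a family of pairwise disjoint blades at `c`. -/
structure IsFan (E F : SimpleGraph W) (c : W) (b : Fin n → Set W) : Prop where
  isBlade : ∀ i, IsBlade E F c (b i)
  disjoint : Pairwise fun i j => Disjoint (b i) (b j)

/-- There is a fan with `n` blades at `c`. -/
def HasFan (E F : SimpleGraph W) (c : W) (n : ℕ) : Prop :=
  ∃ b : Fin n → Set W, IsFan E F c b

variable {E F F' : SimpleGraph W} {c : W} {b : Fin n → Set W}
  {E₁ F₁ : SimpleGraph V} {c₁ : V}

theorem isBlade_bot_iff {t : Set W} :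
    IsBlade E ⊥ c t ↔ ∃ x y, E.Adj c x ∧ E.Adj c y ∧ E.Adj x y ∧ t = {x, y} := by
  refine ⟨?_, ?_⟩
  · rintro (hx | ⟨hx, hy, hxy⟩)
    · exact hx.elim
    · exact ⟨_, _, hx, hy, hxy, rfl⟩
  · rintro ⟨x, y, hx, hy, hxy, rfl⟩
    exact .triangle hx hy hxy

theorem IsBlade.mono (hF : F ≤ F') {s : Set W} (hs : IsBlade E F c s) : IsBlade E F' c s := by
  rcases hs with hx | ⟨hx, hy, hxy⟩
  · exact .heavy (hF hx)
  · exact .triangle hx hy hxy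

theorem IsFan.comp (hb : IsFan E F c b) {e : Fin m → Fin n} (he : e.Injective) :
    IsFan E F c (b ∘ e) :=
  ⟨fun _ => hb.isBlade _, fun _ _ hij => hb.disjoint (he.ne hij)⟩

theorem IsFan.cons (hb : IsFan E F c b) {s : Set W} (hs : IsBlade E F c s)
    (hsb : ∀ i, Disjoint s (b i)) : IsFan E F c (Fin.cons s b : Fin (n + 1) → Set W) where
  isBlade := Fin.cases hs hb.isBlade
  disjoint := by
    refine Fin.cases (Fin.cases (fun h => (h rfl).elim) fun j _ => hsb j) fun i =>
      Fin.cases (fun _ => (hsb i).symm) fun j hij => hb.disjoint (ne_of_apply_ne _ hij)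

/-- Shrinking each blade along a relation under which no vertex has two sources keeps the blades
disjoint. -/
theorem IsFan.exists_of_rel {R : W → V → Prop} (hR : Relator.LeftUnique R) (hb : IsFan E F c b)
    (h : ∀ i, ∃ t, IsBlade E₁ F₁ c₁ t ∧ ∀ v ∈ t, ∃ w ∈ b i, R w v) :
    ∃ b₁ : Fin n → Set V, IsFan E₁ F₁ c₁ b₁ ∧ ∀ i, ∀ v ∈ b₁ i, ∃ w ∈ b i, R w v := by
  choose b₁ hb₁ hR₁ using h
  refine ⟨b₁, ⟨hb₁, fun i j hij => Set.disjoint_left.2 fun v hi hj => ?_⟩, hR₁⟩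
  obtain ⟨w, hw, hwv⟩ := hR₁ i v hi
  obtain ⟨w', hw', hwv'⟩ := hR₁ j v hj
  exact Set.disjoint_left.1 (hb.disjoint hij) hw (hR hwv hwv' ▸ hw')

theorem HasFan.of_image_subset (j : V → W)
    (h : ∀ s, IsBlade E F c s → ∃ t, IsBlade E₁ F₁ c₁ t ∧ j '' t ⊆ s) (hE : HasFan E F c n) :
    HasFan E₁ F₁ c₁ n := by
  obtain ⟨b, hb⟩ := hE
  have hR : Relator.LeftUnique fun w v => j v = w := fun _ _ _ h h' => h.symm.trans h'
  obtain ⟨b₁, hb₁, -⟩ := hb.exists_of_rel hR fun i => by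
    obtain ⟨t, ht, hts⟩ := h _ (hb.isBlade i)
    exact ⟨t, ht, fun v hv => ⟨j v, hts ⟨v, hv, rfl⟩, rfl⟩⟩
  exact ⟨b₁, hb₁⟩

theorem HasFan.mono (hF : F ≤ F') (h : HasFan E F c n) : HasFan E F' c n :=
  let ⟨b, hb⟩ := h
  ⟨b, fun i => (hb.isBlade i).mono hF, hb.disjoint⟩

theorem HasFan.of_le (hmn : m ≤ n) (h : HasFan E F c n) : HasFan E F c m :=
  let ⟨_, hb⟩ := h
  ⟨_, hb.comp (Fin.castLE_injective hmn)⟩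

theorem hasFan_zero (E F : SimpleGraph W) (c : W) : HasFan E F c 0 :=
  ⟨Fin.elim0, fun i => i.elim0, fun i => i.elim0⟩

/-- `F` is an admissible set of heavy edges for `E`: no vertex carries a fan with `n + 1` blades. -/
structure IsAdmissible (n : ℕ) (E F : SimpleGraph W) : Prop where
  le : F ≤ E
  not_hasFan : ∀ c, ¬ HasFan E F c (n + 1)

end Fan

section Friendship

/-- The friendship graph: `n` triangles sharing the vertex `none`, where the `i`-th triangle has
the other two vertices `some (i, false)` and `some (i, true)`. -/
def friendshipGraph (n : ℕ) : SimpleGraph (Option (Fin n × Bool)) :=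
  SimpleGraph.fromRel fun p q => p = none ∨ ∃ i, p = some (i, false) ∧ q = some (i, true)

variable {V W X : Type} {n : ℕ} {G : SimpleGraph V}

theorem friendshipGraph_adj_some {i j : Fin n} {d e : Bool} :
    (friendshipGraph n).Adj (some (i, d)) (some (j, e)) ↔ i = j ∧ d ≠ e := by
  simp only [friendshipGraph, fromRel_adj]
  cases d <;> cases e <;> simp +contextual [eq_comm]

theorem friendshipGraph_adj_none {p : Fin n × Bool} :
    (friendshipGraph n).Adj none (some p) := by
  simp [friendshipGraph]

theorem HasFan.contains_friendshipGraph {c : V} (h : HasFan G ⊥ c n) :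
    Contains (friendshipGraph n) G := by
  obtain ⟨b, hb⟩ := h
  choose x y hx hy hxy hbxy using fun i => isBlade_bot_iff.1 (hb.isBlade i)
  let φ : Option (Fin n × Bool) → V := fun p => p.elim c fun q => cond q.2 (y q.1) (x q.1)
  have hφc : ∀ i d, G.Adj c (φ (some (i, d))) := fun i => Bool.rec (hx i) (hy i)
  have hφb : ∀ i d, φ (some (i, d)) ∈ b i := fun i => by
    rw [hbxy]
    exact Bool.rec (.inl rfl) (.inr rfl)
  have hφ : ∀ i d e, d ≠ e → G.Adj (φ (some (i, d))) (φ (some (i, e)))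
    | i, false, true, _ => hxy i
    | i, true, false, _ => (hxy i).symm
  have hinj : Function.Injective φ := by
    rintro (_ | ⟨i, d⟩) (_ | ⟨j, e⟩) hpq
    · rfl
    · exact ((hφc j e).ne hpq).elim
    · exact ((hφc i d).ne hpq.symm).elim
    · obtain rfl : i = j := by
        by_contra hij
        exact Set.disjoint_left.1 (hb.disjoint hij) (hφb i d) (hpq ▸ hφb j e)
      obtain rfl : d = e := by
        by_contra hde
        exact (hφ i d e hde).ne hpq
      rfl
  refine ⟨⟨φ, ?_⟩, hinj⟩
  rintro (_ | ⟨i, d⟩) (_ | ⟨j, e⟩) hpq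
  · exact (hpq.ne rfl).elim
  · exact hφc j e
  · exact (hφc i d).symm
  · obtain ⟨rfl, hde⟩ := friendshipGraph_adj_some.1 hpq
    exact hφ i d e hde

theorem contains_friendshipGraph_iff :
    Contains (friendshipGraph n) G ↔ ∃ c, HasFan G ⊥ c n := by
  refine ⟨fun ⟨f, hf⟩ => ?_, fun ⟨c, hc⟩ => hc.contains_friendshipGraph⟩
  refine ⟨f none, fun i => {f (some (i, false)), f (some (i, true))}, fun i => ?_, ?_⟩
  · exact .triangle (f.map_adj friendshipGraph_adj_none) (f.map_adj friendshipGraph_adj_none)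
      (f.map_adj (friendshipGraph_adj_some.2 ⟨rfl, Bool.false_ne_true⟩))
  · intro i j hij
    simp [hf.eq_iff, hij.symm]

theorem contains_congr {A : SimpleGraph W} {B : SimpleGraph X} (e : A ≃g B) :
    Contains A G ↔ Contains B G :=
  ⟨fun ⟨f, hf⟩ => ⟨f.comp e.symm.toHom, hf.comp e.symm.injective⟩,
    fun ⟨f, hf⟩ => ⟨f.comp e.toHom, hf.comp e.injective⟩⟩

/-- The windmill graph is the friendship graph with three triangles. -/
noncomputable def windmillIso : windmill ≃g friendshipGraph 3 where
  toEquiv := Equiv.ofBijective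
    ![none, some (0, false), some (0, true), some (1, false), some (1, true), some (2, false),
      some (2, true)] (by decide)
  map_rel_iff' {a b} := by
    simp only [windmill, friendshipGraph, SimpleGraph.fromRel_adj, Equiv.ofBijective_apply]
    revert a b
    decide

end Friendship

section Prism

variable {W : Type*} {E F : SimpleGraph W} {S : Set W} {c : W} {n : ℕ}

/-- The heavy edges of the prism `E □ ⊤` over a graph `E` with heavy edges `F`: the two copies of
`F` and the fibres over `S`. -/
def prismHeavy (F : SimpleGraph W) (S : Set W) : SimpleGraph (W × Bool) where
  Adj p q := (F □ ⊤).Adj p q ∧ (p.1 = q.1 → p.1 ∈ S)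
  symm := ⟨fun _ _ h => ⟨h.1.symm, fun e => e ▸ h.2 e.symm⟩⟩
  loopless := ⟨fun _ h => h.1.ne rfl⟩

theorem prismHeavy_le (hF : F ≤ E) : prismHeavy F S ≤ E □ ⊤ :=
  fun _ _ h => h.1.imp (And.imp_left fun h => hF h) id

theorem snd_eq_of_triangle_prism {p q r : W × Bool} (hpq : (E □ ⊤).Adj p q)
    (hpr : (E □ ⊤).Adj p r) (hqr : (E □ ⊤).Adj q r) : p.2 = q.2 := by
  simp only [boxProd_adj, top_adj] at hpq hpr hqr
  have hirrefl := E.irrefl (v := p.1)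
  have hpigeon : p.2 = q.2 ∨ p.2 = r.2 ∨ q.2 = r.2 :=
    (by decide : ∀ a b c : Bool, a = b ∨ a = c ∨ b = c) _ _ _
  grind

theorem isBlade_prism_iff {b : Bool} {t : Set (W × Bool)} :
    IsBlade (E □ ⊤) (prismHeavy F S) (c, b) t ↔
      (∃ s, IsBlade E F c s ∧ t = (·, b) '' s) ∨ (c ∈ S ∧ t = {(c, !b)}) := by
  constructor
  · rintro (@⟨⟨x, d⟩, ⟨hx, rfl⟩ | ⟨hd, rfl⟩, hS⟩ | @⟨⟨x, d⟩, ⟨y, e⟩, hx, hy, hxy⟩)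
    · exact .inl ⟨{x}, .heavy hx, by simp⟩
    · exact .inr ⟨hS rfl, by cases b <;> cases d <;> simp_all⟩
    · obtain rfl : b = d := snd_eq_of_triangle_prism hx hy hxy
      obtain rfl : b = e := snd_eq_of_triangle_prism hy hx hxy.symm
      rw [boxProd_adj_left] at hx hy hxy
      exact .inl ⟨{x, y}, .triangle hx hy hxy, by simp [Set.image_pair]⟩
  · rintro (⟨s, hx | ⟨hx, hy, hxy⟩, rfl⟩ | ⟨hc, rfl⟩)
    · rw [Set.image_singleton]
      exact .heavy ⟨boxProd_adj_left.2 hx, fun h => (hx.ne h).elim⟩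
    · rw [Set.image_pair]
      exact .triangle (boxProd_adj_left.2 hx) (boxProd_adj_left.2 hy) (boxProd_adj_left.2 hxy)
    · exact .heavy ⟨boxProd_adj_right.2 (by simp), fun _ => hc⟩

theorem HasFan.prism (b : Bool) (h : HasFan E F c n) :
    HasFan (E □ ⊤) (prismHeavy F S) (c, b) n :=
  h.of_image_subset Prod.fst fun s hs =>
    ⟨_, isBlade_prism_iff.2 (.inl ⟨s, hs, rfl⟩), by simp [Set.image_image]⟩

theorem HasFan.prism_succ (b : Bool) (hc : c ∈ S) (h : HasFan E F c n) :
    HasFan (E □ ⊤) (prismHeavy F S) (c, b) (n + 1) := by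
  obtain ⟨B, hB⟩ := h
  have hR : Relator.LeftUnique fun w (p : W × Bool) => p = (w, b) :=
    fun _ _ _ h h' => congrArg Prod.fst (h.symm.trans h')
  obtain ⟨B', hB', hBB'⟩ := hB.exists_of_rel (E₁ := E □ ⊤) (F₁ := prismHeavy F S) (c₁ := (c, b))
    hR fun i => ⟨_, isBlade_prism_iff.2 (.inl ⟨B i, hB.isBlade i, rfl⟩), by simp⟩
  refine ⟨_, hB'.cons (isBlade_prism_iff.2 (.inr ⟨hc, rfl⟩)) fun i => ?_⟩
  rw [Set.disjoint_singleton_left]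
  intro hi
  obtain ⟨w, -, hw⟩ := hBB' i _ hi
  simp at hw

theorem IsFan.of_prism {b : Bool} {B : Fin n → Set (W × Bool)}
    (hB : IsFan (E □ ⊤) (prismHeavy F S) (c, b) B) (hc : ∀ i, (c, !b) ∉ B i) :
    HasFan E F c n := by
  have hR : Relator.LeftUnique fun (p : W × Bool) w => (w, b) = p :=
    fun _ _ _ h h' => h.symm.trans h'
  obtain ⟨B', hB', -⟩ := hB.exists_of_rel hR fun i => by
    obtain ⟨s, hs, hBs⟩ | ⟨-, hBs⟩ := isBlade_prism_iff.1 (hB.isBlade i)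
    · exact ⟨s, hs, fun w hw => ⟨_, hBs ▸ ⟨w, hw, rfl⟩, rfl⟩⟩
    · exact (hc i (hBs ▸ rfl)).elim
  exact ⟨B', hB'⟩

theorem IsAdmissible.prism (h : IsAdmissible n E F) :
    IsAdmissible n (E □ ⊤) (prismHeavy F {c | ¬ HasFan E F c n}) := by
  refine ⟨prismHeavy_le h.le, ?_⟩
  rintro ⟨c, b⟩ ⟨B, hB⟩
  by_cases hc : ∃ i, (c, !b) ∈ B i
  · obtain ⟨i, hi⟩ := hc
    have hcn : ¬ HasFan E F c n := by
      obtain ⟨s, -, hBs⟩ | ⟨hcn, -⟩ := isBlade_prism_iff.1 (hB.isBlade i)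
      · simp [hBs] at hi
      · exact hcn
    refine hcn (IsFan.of_prism (hB.comp i.succAbove_right_injective) fun k hk => ?_)
    exact Set.disjoint_left.1 (hB.disjoint (i.succAbove_ne k)) hk hi
  · exact h.not_hasFan c (IsFan.of_prism hB (not_exists.1 hc))

theorem exists_isAdmissible_hasFan {α : Type u} [Finite α] {A : SimpleGraph α}
    (hA : IsAdmissible n A ⊥) {k : ℕ} (hk : k ≤ n) :
    ∃ (W : Type u) (_ : Finite W) (E F : SimpleGraph W) (_ : A ↪g E),
      IsAdmissible n E F ∧ ∀ c, HasFan E F c k := by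
  induction k with
  | zero => exact ⟨α, inferInstance, A, ⊥, .refl, hA, hasFan_zero A ⊥⟩
  | succ k ih =>
    obtain ⟨W, _, E, F, i, hEF, hfan⟩ := ih (Nat.le_of_succ_le hk)
    refine ⟨W × Bool, inferInstance, E □ ⊤, _, (E.boxProdLeft ⊤ false).comp i, hEF.prism, ?_⟩
    rintro ⟨c, b⟩
    by_cases hc : HasFan E F c n
    · exact (hc.prism b).of_le hk
    · exact (hfan c).prism_succ b hc

theorem exists_maximal_isAdmissible {α : Type u} [Finite α] {A : SimpleGraph α}
    (hA : IsAdmissible n A ⊥) :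
    ∃ (W : Type u) (_ : Finite W) (E F : SimpleGraph W) (_ : A ↪g E),
      Maximal (IsAdmissible n E) F ∧ ∀ c, HasFan E F c n := by
  obtain ⟨W, _, E, F, i, hEF, hfan⟩ := exists_isAdmissible_hasFan hA le_rfl
  obtain ⟨F', hFF', hF'⟩ :=
    Set.Finite.exists_le_maximal (Set.toFinite {F | IsAdmissible n E F}) hEF
  exact ⟨W, ‹_›, E, F', i, hF', fun c => (hfan c).mono hFF'⟩

end Prism

section Controls

variable {V W : Type*} {E F : SimpleGraph W} {G : SimpleGraph V} {j : W → V} {n : ℕ}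

/-- The core `(E, F)` controls the graph `G` into which it is mapped by `j`: every triangle of `G`
at a core vertex contains a blade of the core. -/
def Controls (E F : SimpleGraph W) (G : SimpleGraph V) (j : W → V) : Prop :=
  ∀ c t, IsBlade G ⊥ (j c) t → ∃ s, IsBlade E F c s ∧ j '' s ⊆ t

theorem Controls.hasFan (h : Controls E F G j) {c : W} (hc : HasFan G ⊥ (j c) n) :
    HasFan E F c n :=
  hc.of_image_subset j (h c)

theorem controls_of_embedding (j : E ↪g G)
    (hedge : ∀ c s x, E.Adj c s → x ∉ Set.range j → G.Adj (j c) x → G.Adj (j s) x → F.Adj c s)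
    (hvertex : ∀ c x y, G.Adj (j c) x → G.Adj (j c) y → G.Adj x y →
      x ∈ Set.range j ∨ y ∈ Set.range j) : Controls E F G j := by
  have hheavy {c s : W} {x : V} (hcs : G.Adj (j c) (j s)) (hx : x ∉ Set.range j)
      (hcx : G.Adj (j c) x) (hsx : G.Adj (j s) x) : IsBlade E F c {s} :=
    .heavy (hedge c s x (j.map_adj_iff.1 hcs) hx hcx hsx)
  intro c t ht
  obtain ⟨x, y, hx, hy, hxy, rfl⟩ := isBlade_bot_iff.1 ht
  by_cases hxj : x ∈ Set.range j <;> by_cases hyj : y ∈ Set.range j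
  · obtain ⟨u, rfl⟩ := hxj
    obtain ⟨v, rfl⟩ := hyj
    rw [j.map_adj_iff] at hx hy hxy
    exact ⟨{u, v}, .triangle hx hy hxy, (Set.image_pair j u v).subset⟩
  · obtain ⟨u, rfl⟩ := hxj
    exact ⟨{u}, hheavy hx hyj hy hxy, by simp⟩
  · obtain ⟨v, rfl⟩ := hyj
    exact ⟨{v}, hheavy hy hxj hx hxy.symm, by simp⟩
  · exact ((hvertex c x y hx hy hxy).elim hxj hyj).elim

/-- A choice of apexes: distinct vertices `z e` outside the image of `j`, each forming a triangle
with the image of the heavy edge `e`. The values of `z` off `F.edgeSet` are irrelevant. -/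
structure IsApexChoice (F : SimpleGraph W) (G : SimpleGraph V) (j : W → V) (z : Sym2 W → V) :
    Prop where
  injOn : F.edgeSet.InjOn z
  notMem_range : ∀ e ∈ F.edgeSet, z e ∉ Set.range j
  adj : ∀ e ∈ F.edgeSet, ∀ w ∈ e, G.Adj (j w) (z e)

theorem IsApexChoice.exists_isFan {j : E ↪g G} {z : Sym2 W → V} (hz : IsApexChoice F G j z)
    (hF : F ≤ E) {c : W} {b : Fin n → Set W} (hb : IsFan E F c b) :
    ∃ b' : Fin n → Set V, IsFan G ⊥ (j c) b' ∧ ∀ i, b' i ⊆ Set.range j ∪ Set.range z := by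
  let R (w : W) (v : V) : Prop := v = j w ∨ F.Adj c w ∧ v = z s(c, w)
  have hR : Relator.LeftUnique R := by
    rintro w w' _ (rfl | ⟨hw, rfl⟩) (h | ⟨hw', h⟩)
    · exact j.injective h
    · exact (hz.notMem_range _ hw' ⟨w, h⟩).elim
    · exact (hz.notMem_range _ hw ⟨w', h.symm⟩).elim
    · exact Sym2.congr_right.1 (hz.injOn hw hw' h)
  have hblade (s : Set W) (hs : IsBlade E F c s) :
      ∃ t, IsBlade G ⊥ (j c) t ∧ ∀ v ∈ t, ∃ w ∈ s, R w v := by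
    rcases hs with @⟨w, hw⟩ | @⟨u, v, hu, hv, huv⟩
    · refine ⟨_, .triangle (j.map_adj_iff.2 (hF hw))
        (hz.adj _ hw c (Sym2.mem_mk_left _ _)) (hz.adj _ hw w (Sym2.mem_mk_right _ _)), ?_⟩
      simp [R, hw]
    · refine ⟨_, .triangle (j.map_adj_iff.2 hu) (j.map_adj_iff.2 hv) (j.map_adj_iff.2 huv), ?_⟩
      simp [R]
  obtain ⟨b', hb', hbb'⟩ := hb.exists_of_rel hR fun i => hblade _ (hb.isBlade i)
  refine ⟨b', hb', fun i v hv => ?_⟩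
  obtain ⟨w, -, rfl | ⟨-, rfl⟩⟩ := hbb' i v hv
  exacts [.inl ⟨w, rfl⟩, .inr ⟨_, rfl⟩]

theorem IsApexChoice.update [DecidableEq W] {z : Sym2 W → V} (hz : IsApexChoice F G j z) {c s : W}
    {x : V} (hxj : x ∉ Set.range j) (hxz : x ∉ Set.range z) (hc : G.Adj (j c) x)
    (hs : G.Adj (j s) x) :
    IsApexChoice (F ⊔ edge c s) G j (Function.update z s(c, s) x) := by
  have hmem {e : Sym2 W} (he : e ∈ (F ⊔ edge c s).edgeSet) (hne : e ≠ s(c, s)) :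
      e ∈ F.edgeSet := by
    rw [edgeSet_sup] at he
    exact he.resolve_right fun h => hne (edgeSet_edge_subset h)
  refine ⟨fun e he e' he' h => ?_, fun e he => ?_, fun e he w hw => ?_⟩
  · rcases eq_or_ne e s(c, s) with rfl | hne <;> rcases eq_or_ne e' s(c, s) with rfl | hne'
    · rfl
    · rw [Function.update_self, Function.update_of_ne hne'] at h
      exact (hxz ⟨e', h.symm⟩).elim
    · rw [Function.update_self, Function.update_of_ne hne] at h
      exact (hxz ⟨e, h⟩).elim
    · rw [Function.update_of_ne hne, Function.update_of_ne hne'] at h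
      exact hz.injOn (hmem he hne) (hmem he' hne') h
  · rcases eq_or_ne e s(c, s) with rfl | hne
    · simpa using hxj
    · simpa only [Function.update_of_ne hne] using hz.notMem_range e (hmem he hne)
  · rcases eq_or_ne e s(c, s) with rfl | hne
    · rw [Function.update_self]
      rcases Sym2.mem_iff.1 hw with rfl | rfl
      exacts [hc, hs]
    · simpa only [Function.update_of_ne hne] using hz.adj e (hmem he hne) w hw

/-- Otherwise the edge could be made heavy, with apex `x`, contradicting maximality. -/
theorem IsApexChoice.adj_of_maximal (hF : Maximal (IsAdmissible n E) F) {j : E ↪g G}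
    (hG : ∀ v, ¬ HasFan G ⊥ v (n + 1)) {z : Sym2 W → V} (hz : IsApexChoice F G j z) {c s : W}
    {x : V} (hcs : E.Adj c s) (hxj : x ∉ Set.range j) (hxz : x ∉ Set.range z)
    (hcx : G.Adj (j c) x) (hsx : G.Adj (j s) x) : F.Adj c s := by
  classical
  have hle : F ⊔ edge c s ≤ E := sup_le hF.prop.le ((edge_le_iff E).2 (.inr hcs))
  have hadm : IsAdmissible n E (F ⊔ edge c s) := by
    refine ⟨hle, fun d ⟨b, hb⟩ => ?_⟩
    obtain ⟨b', hb', -⟩ := (hz.update hxj hxz hcx hsx).exists_isFan hle hb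
    exact hG _ ⟨b', hb'⟩
  exact hF.le_of_ge hadm le_sup_left (.inr ((edge_adj ..).2 ⟨.inl ⟨rfl, rfl⟩, hcs.ne⟩))

/-- Otherwise the triangle could be added to a fan with `n` blades at `c`. -/
theorem IsApexChoice.mem_range_or_mem_range {j : E ↪g G} {z : Sym2 W → V}
    (hz : IsApexChoice F G j z) (hF : F ≤ E) {c : W} (hc : HasFan E F c n)
    (hG : ¬ HasFan G ⊥ (j c) (n + 1)) {x y : V} (hxz : x ∉ Set.range z) (hyz : y ∉ Set.range z)
    (hx : G.Adj (j c) x) (hy : G.Adj (j c) y) (hxy : G.Adj x y) :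
    x ∈ Set.range j ∨ y ∈ Set.range j := by
  by_contra! ⟨hxj, hyj⟩
  obtain ⟨b, hb⟩ := hc
  obtain ⟨b', hb', hsub⟩ := hz.exists_isFan hF hb
  refine hG ⟨_, hb'.cons (.triangle hx hy hxy) fun i => ?_⟩
  refine Set.disjoint_of_subset_right (hsub i) ?_
  simp [-Set.mem_range, *]

theorem controls_of_maximal (hF : Maximal (IsAdmissible n E) F) (hfan : ∀ c, HasFan E F c n)
    {j : E ↪g G} (hG : ∀ v, ¬ HasFan G ⊥ v (n + 1))
    (hz : ∀ x y, ∃ z, IsApexChoice F G j z ∧ x ∉ Set.range z ∧ y ∉ Set.range z) :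
    Controls E F G j := by
  refine controls_of_embedding j (fun c s x hcs hxj hcx hsx => ?_) fun c x y hx hy hxy => ?_
  · obtain ⟨z, hz, hxz, -⟩ := hz x x
    exact hz.adj_of_maximal hF hG hcs hxj hxz hcx hsx
  · obtain ⟨z, hz, hxz, hyz⟩ := hz x y
    exact hz.mem_range_or_mem_range hF.prop.le (hfan c) (hG _) hxz hyz hx hy hxy

end Controls

section Hat

variable {V W : Type*} {E F : SimpleGraph W} {G : SimpleGraph V} {n : ℕ}

/-- The graph `E` with three hats `(e, k)` on every edge `e` of `F`, i.e. new vertices adjacent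
exactly to the endpoints of `e`. Pairs `e` that are not edges of `F` contribute isolated vertices,
and three hats are what is needed to avoid any two given vertices. -/
def hatGraph (E F : SimpleGraph W) : SimpleGraph (W ⊕ Sym2 W × Fin 3) where
  Adj
    | .inl u, .inl v => E.Adj u v
    | .inl u, .inr p | .inr p, .inl u => p.1 ∈ F.edgeSet ∧ u ∈ p.1
    | .inr _, .inr _ => False
  symm := ⟨by
    rintro (u | p) (v | q) h
    exacts [Adj.symm (G := E) h, h, h, h]⟩
  loopless := ⟨by
    rintro (u | p) h
    exacts [E.irrefl h, h]⟩

/-- The inclusion of the core into its graph with hats. -/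
def hatGraph.inl (E F : SimpleGraph W) : E ↪g hatGraph E F where
  toFun := Sum.inl
  inj' := Sum.inl_injective
  map_rel_iff' := Iff.rfl

theorem controls_hatGraph (E F : SimpleGraph W) :
    Controls E F (hatGraph E F) (hatGraph.inl E F) := by
  refine controls_of_embedding _ ?_ ?_
  · rintro c s (x | ⟨e, k⟩) hcs hx hce hse
    · exact (hx ⟨x, rfl⟩).elim
    · obtain rfl := (Sym2.mem_and_mem_iff hcs.ne).1 ⟨hce.2, hse.2⟩
      exact hce.1
  · rintro c (x | p) (y | q) - - hxy
    exacts [.inl ⟨x, rfl⟩, .inl ⟨x, rfl⟩, .inr ⟨y, rfl⟩, hxy.elim]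

/-- All triangles at a hat of `s(u, v)` are equal to `{u, v}`, so fans there are no larger than the
fans at `u`. -/
theorem hasFan_of_hasFan_hatGraph_inr {u v : W} {k : Fin 3}
    (h : HasFan (hatGraph E F) ⊥ (.inr (s(u, v), k)) n) : HasFan E F u n := by
  refine h.of_image_subset Sum.inl fun t ht => ?_
  obtain ⟨x | p, y | q, hx, hy, hxy, rfl⟩ := isBlade_bot_iff.1 ht
  · obtain ⟨rfl, rfl⟩ | ⟨rfl, rfl⟩ : u = x ∧ v = y ∨ u = y ∧ v = x :=
      Sym2.eq_iff.1 ((Sym2.mem_and_mem_iff (ne_of_apply_ne _ hxy.ne)).1 ⟨hx.2, hy.2⟩)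
    all_goals exact ⟨{v}, .heavy hx.1, by simp⟩
  · exact hy.elim
  · exact hx.elim
  · exact hx.elim

theorem IsAdmissible.not_hasFan_hatGraph (h : IsAdmissible n E F) :
    ∀ p, ¬ HasFan (hatGraph E F) ⊥ p (n + 1)
  | .inl c => fun hc => h.not_hasFan c ((controls_hatGraph E F).hasFan hc)
  | .inr (e, k) => by
    induction e with
    | _ u v => exact fun huv => h.not_hasFan u (hasFan_of_hasFan_hatGraph_inr huv)

theorem exists_isApexChoice (f : hatGraph E F ↪g G) (x y : V) :
    ∃ z, IsApexChoice F G (f.comp (hatGraph.inl E F)) z ∧ x ∉ Set.range z ∧ y ∉ Set.range z := by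
  classical
  have havoid (e : Sym2 W) : ∃ k, f (.inr (e, k)) ∉ ({x, y} : Finset V) := by
    have hinj : Function.Injective fun k => f (.inr (e, k)) := fun k l h =>
      congrArg Prod.snd (Sum.inr_injective (f.injective h))
    have hcard : ({x, y} : Finset V).card < (Finset.univ.map ⟨_, hinj⟩).card := by
      simpa using Nat.lt_succ_of_le (Finset.card_le_two (a := x) (b := y))
    obtain ⟨v, hv, hvxy⟩ := Finset.exists_mem_notMem_of_card_lt_card hcard
    obtain ⟨k, -, rfl⟩ := Finset.mem_map.1 hv
    exact ⟨k, hvxy⟩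
  choose k hk using havoid
  refine ⟨fun e => f (.inr (e, k e)), ⟨?_, ?_, ?_⟩, ?_, ?_⟩
  · intro e _ e' _ h
    exact congrArg Prod.fst (Sum.inr_injective (f.injective h))
  · rintro e - ⟨w, hw⟩
    exact Sum.inl_ne_inr (f.injective hw)
  · exact fun e he w hw => f.map_adj_iff.2 ⟨he, hw⟩
  · rintro ⟨e, he⟩
    exact hk e (by simp [he])
  · rintro ⟨e, he⟩
    exact hk e (by simp [he])

end Hat

section Amalgam

open CategoryTheory Limits.Types in
theorem exists_embedding_amalgam {S X Y : Type u} [Finite X] [Finite Y] (f : S ↪ X) (g : S ↪ Y) :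
    ∃ (Z : Type u) (_ : Finite Z) (f' : X ↪ Z) (g' : Y ↪ Z),
      (∀ s, f' (f s) = g' (g s)) ∧ (∀ x y, f' x = g' y → ∃ s, f s = x ∧ g s = y) ∧
      ∀ p, p ∈ Set.range f' ∨ p ∈ Set.range g' := by
  let φ : S ⟶ X := ↾f
  let ψ : S ⟶ Y := ↾g
  have : Mono φ := (mono_iff_injective φ).2 f.injective
  have : Mono ψ := (mono_iff_injective ψ).2 g.injective
  refine ⟨Pushout φ ψ, inferInstanceAs (Finite (Quot _)),
    ⟨Pushout.inl φ ψ, (mono_iff_injective _).1 inferInstance⟩,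
    ⟨Pushout.inr φ ψ, (mono_iff_injective _).1 inferInstance⟩,
    fun s => ConcreteCategory.congr_hom (Pushout.condition φ ψ) s,
    fun x y => (Pushout.inl_eq_inr_iff φ ψ x y).1, ?_⟩
  rintro ⟨x | y⟩
  exacts [.inl ⟨x, rfl⟩, .inr ⟨y, rfl⟩]

variable {W γ δ ε : Type*} {E F : SimpleGraph W} {B : SimpleGraph γ} {C : SimpleGraph δ}
  {D : SimpleGraph ε} {n : ℕ}

/-- `D` is the free amalgam of `B` and `C` over `E`: the images of `B` and `C` cover the vertices
and edges of `D` and meet exactly in the image of `E`. -/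
structure IsFreeAmalgam (f : E ↪g B) (g : E ↪g C) (f' : B ↪g D) (g' : C ↪g D) : Prop where
  comm : ∀ w, f' (f w) = g' (g w)
  exists_of_eq : ∀ b c, f' b = g' c → ∃ w, f w = b
  cover : ∀ p, p ∈ Set.range f' ∨ p ∈ Set.range g'
  adj : ∀ p q, D.Adj p q →
    (p ∈ Set.range f' ∧ q ∈ Set.range f') ∨ p ∈ Set.range g' ∧ q ∈ Set.range g'

theorem comap_map_sup_map (f : E ↪g B) (g : E ↪g C) (f' : γ ↪ ε) (g' : δ ↪ ε)
    (h : ∀ b c, f' b = g' c → ∃ w, f w = b ∧ g w = c) : (B.map f' ⊔ C.map g').comap f' = B := by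
  refine le_antisymm (fun b b' => ?_) fun b b' hbb' => .inl (map_adj_apply.2 hbb')
  rintro (hB | ⟨-, c, c', hcc', hc, hc'⟩)
  · exact map_adj_apply.1 hB
  · obtain ⟨w, rfl, rfl⟩ := h b c hc.symm
    obtain ⟨w', rfl, rfl⟩ := h b' c' hc'.symm
    exact f.map_adj_iff.2 (g.map_adj_iff.1 hcc')

theorem exists_isFreeAmalgam {W γ δ : Type u} [Finite γ] [Finite δ] {E : SimpleGraph W}
    {B : SimpleGraph γ} {C : SimpleGraph δ} (f : E ↪g B) (g : E ↪g C) :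
    ∃ (ε : Type u) (_ : Finite ε) (D : SimpleGraph ε) (f' : B ↪g D) (g' : C ↪g D),
      IsFreeAmalgam f g f' g' := by
  obtain ⟨ε, _, f', g', hcomm, hmeet, hcover⟩ :=
    exists_embedding_amalgam f.toEmbedding g.toEmbedding
  have hB : (B.map f' ⊔ C.map g').comap f' = B := comap_map_sup_map f g f' g' hmeet
  have hC : (B.map f' ⊔ C.map g').comap g' = C := by
    rw [sup_comm]
    exact comap_map_sup_map g f g' f' fun c b hcb => (hmeet b c hcb.symm).imp fun _ => And.symm
  refine ⟨ε, ‹_›, B.map f' ⊔ C.map g', ⟨f', fun {b b'} => iff_of_eq (congrArg (Adj · b b') hB)⟩,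
    ⟨g', fun {c c'} => iff_of_eq (congrArg (Adj · c c') hC)⟩, hcomm,
    fun b c hbc => (hmeet b c hbc).imp fun _ => And.left, hcover, ?_⟩
  rintro _ _ (⟨-, b, b', -, rfl, rfl⟩ | ⟨-, c, c', -, rfl, rfl⟩)
  exacts [.inl ⟨⟨b, rfl⟩, b', rfl⟩, .inr ⟨⟨c, rfl⟩, c', rfl⟩]

theorem IsBlade.of_embedding (j : B ↪g D) {b : γ} {t : Set ε} (ht : IsBlade D ⊥ (j b) t)
    (htj : t ⊆ Set.range j) : ∃ s, IsBlade B ⊥ b s ∧ j '' s = t := by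
  obtain ⟨x, y, hx, hy, hxy, rfl⟩ := isBlade_bot_iff.1 ht
  obtain ⟨u, rfl⟩ := htj (.inl rfl)
  obtain ⟨v, rfl⟩ := htj (.inr rfl)
  rw [j.map_adj_iff] at hx hy hxy
  exact ⟨{u, v}, .triangle hx hy hxy, Set.image_pair j u v⟩

namespace IsFreeAmalgam

variable {f : E ↪g B} {g : E ↪g C} {f' : B ↪g D} {g' : C ↪g D}

theorem symm (h : IsFreeAmalgam f g f' g') : IsFreeAmalgam g f g' f' where
  comm w := (h.comm w).symm
  exists_of_eq c b hcb := by
    obtain ⟨w, rfl⟩ := h.exists_of_eq b c hcb.symm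
    exact ⟨w, g'.injective ((h.comm w).symm.trans hcb.symm)⟩
  cover p := (h.cover p).symm
  adj p q hpq := (h.adj p q hpq).symm

/-- Two of the three edges of a triangle lie on the same side, and they cover its vertices. -/
theorem insert_subset_range (h : IsFreeAmalgam f g f' g') {p : ε} {t : Set ε}
    (ht : IsBlade D ⊥ p t) : insert p t ⊆ Set.range f' ∨ insert p t ⊆ Set.range g' := by
  obtain ⟨x, y, hx, hy, hxy, rfl⟩ := isBlade_bot_iff.1 ht
  have := h.adj _ _ hx
  have := h.adj _ _ hy
  have := h.adj _ _ hxy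
  simp only [Set.insert_subset_iff, Set.singleton_subset_iff]
  tauto

theorem controls (h : IsFreeAmalgam f g f' g') (hB : Controls E F B f) (hC : Controls E F C g) :
    Controls E F D (f' ∘ f) := by
  intro w t ht
  rcases h.insert_subset_range ht with hsub | hsub
  · obtain ⟨t', ht', rfl⟩ := ht.of_embedding f' ((Set.subset_insert _ _).trans hsub)
    obtain ⟨s, hs, hst⟩ := hB w t' ht'
    exact ⟨s, hs, by rw [Set.image_comp]; exact Set.image_mono hst⟩
  · rw [Function.comp_apply, h.comm] at ht
    obtain ⟨t', ht', rfl⟩ := ht.of_embedding g' ((Set.subset_insert _ _).trans hsub)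
    obtain ⟨s, hs, hst⟩ := hC w t' ht'
    have : f' ∘ f = g' ∘ g := funext h.comm
    exact ⟨s, hs, by rw [this, Set.image_comp]; exact Set.image_mono hst⟩

theorem hasFan_of_notMem_range (h : IsFreeAmalgam f g f' g') {b : γ} (hb : f' b ∉ Set.range g')
    (hD : HasFan D ⊥ (f' b) n) : HasFan B ⊥ b n := by
  refine hD.of_image_subset f' fun t ht => ?_
  rcases h.insert_subset_range ht with hsub | hsub
  · obtain ⟨s, hs, hst⟩ := ht.of_embedding f' ((Set.subset_insert _ _).trans hsub)
    exact ⟨s, hs, hst.subset⟩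
  · exact (hb (hsub (Set.mem_insert _ _))).elim

theorem not_hasFan (h : IsFreeAmalgam f g f' g') (hE : ∀ c, ¬ HasFan E F c n)
    (hB : ∀ b, ¬ HasFan B ⊥ b n) (hC : ∀ c, ¬ HasFan C ⊥ c n) (hf : Controls E F B f)
    (hg : Controls E F C g) (p : ε) : ¬ HasFan D ⊥ p n := by
  intro hp
  by_cases hpf : p ∈ Set.range f' <;> by_cases hpg : p ∈ Set.range g'
  · obtain ⟨b, rfl⟩ := hpf
    obtain ⟨c, hc⟩ := hpg
    obtain ⟨w, rfl⟩ := h.exists_of_eq b c hc.symm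
    exact hE w ((h.controls hf hg).hasFan hp)
  · obtain ⟨b, rfl⟩ := hpf
    exact hB b (h.hasFan_of_notMem_range hpg hp)
  · obtain ⟨c, rfl⟩ := hpg
    exact hC c (h.symm.hasFan_of_notMem_range hpf hp)
  · exact (h.cover p).elim hpf hpg

end IsFreeAmalgam

end Amalgam

theorem windmillFree_wap_general (n : ℕ) :
    GraphWAP fun _ G => ¬ Contains (friendshipGraph (n + 1)) G := by
  simp only [contains_friendshipGraph_iff, not_exists]
  intro α _ A hA
  obtain ⟨W, _, E, F, i, hF, hfan⟩ := exists_maximal_isAdmissible ⟨bot_le, hA⟩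
  refine ⟨_, .ofFinite _, hatGraph E F, (hatGraph.inl E F).comp i, hF.prop.not_hasFan_hatGraph, ?_⟩
  intro γ _ B hB δ _ C hC f g
  obtain ⟨ε, _, D, f', g', hD⟩ :=
    exists_isFreeAmalgam (f.comp (hatGraph.inl E F)) (g.comp (hatGraph.inl E F))
  exact ⟨ε, .ofFinite ε, D,
    hD.not_hasFan hF.prop.not_hasFan hB hC (controls_of_maximal hF hfan hB (exists_isApexChoice f))
      (controls_of_maximal hF hfan hC (exists_isApexChoice g)),
    f', g', fun a => hD.comm (i a)⟩

/-- The class of all finite windmill-free graphs has the weak amalgamation property. -/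
theorem windmillFree_wap :
    GraphWAP (fun _ G => ¬ Contains windmill G) := by
  simpa only [contains_congr windmillIso] using windmillFree_wap_general 2
end

section
/- Let A be a finite simple graph with nonempty vertex set which is C4-free, has the property that any two distinct vertices are adjacent or have a common neighbor (diameter at most 2), and has no dominating vertex (no vertex adjacent to every other vertex). Then there is an edge of A that is not contained in any triangle; that is, there are adjacent vertices x, y such that no vertex is adjacent to both x and y. -/
/-!
If every edge lies in a triangle, then by the diameter hypothesis any two distinct vertices have a
common neighbor, and `C₄`-freeness makes it unique. So it suffices to show that a nonempty finite
graph in which any two distinct vertices have exactly one common neighbor has a universal vertex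
(the friendship theorem of Erdős, Rényi and Sós).

Double counting the edges between the neighborhoods of two nonadjacent vertices shows that these
have the same degree. Without a universal vertex the complement is connected, so the graph is
strongly regular with parameters `(n, k, 1, 1)`, where `n = k (k - 1) + 1`. If `k ≥ 3`, let `p` be a
prime factor of `k - 1`. Modulo `p` the adjacency matrix `A` satisfies `A ^ 2 = J` and `A * J = J`
for the all-ones matrix `J`, whence `A ^ p = J` has trace `n`; but the trace of `A ^ p` is also
`(tr A) ^ p = 0`, although `n` is `1` modulo `p`. If `k ≤ 2`, then `n = k + 1` and every vertex is
universal.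
-/

/-- A graph is `C₄`-free if it contains no four distinct vertices forming a 4-cycle. -/
def C4Free {V : Type} (G : SimpleGraph V) : Prop :=
  ¬ ∃ a b c d : V, a ≠ b ∧ a ≠ c ∧ a ≠ d ∧ b ≠ c ∧ b ≠ d ∧ c ≠ d ∧
    G.Adj a b ∧ G.Adj b c ∧ G.Adj c d ∧ G.Adj d a

open Finset Matrix SimpleGraph

/-- Any two distinct vertices of `G` have exactly `μ` common neighbors. The case `μ = 1` is the
hypothesis of the friendship theorem. Common neighbors are counted as in
`SimpleGraph.IsSRGWith`. -/
def HasPairwiseCommonNeighbors {V : Type*} [Fintype V] (G : SimpleGraph V) [DecidableRel G.Adj]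
    (μ : ℕ) : Prop :=
  Pairwise fun v w ↦ Fintype.card (G.commonNeighbors v w) = μ

theorem preconnected_compl_of_subsingleton_commonNeighbors {V : Type*} {G : SimpleGraph V}
    (hsub : Pairwise fun v w ↦ (G.commonNeighbors v w).Subsingleton)
    (huniv : ¬ ∃ v, G.IsUniversal v) : Gᶜ.Preconnected := by
  have exists_compl_adj (v : V) : ∃ x, Gᶜ.Adj v x := by
    simpa [IsUniversal, compl_adj] using not_exists.mp huniv v
  intro v w
  by_cases hvw : G.Adj v w
  · obtain ⟨x, hvx⟩ := exists_compl_adj v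
    obtain ⟨y, hwy⟩ := exists_compl_adj w
    by_cases hxw : G.Adj x w
    · by_cases hvy : G.Adj v y
      · have hxy : Gᶜ.Adj x y := by
          refine ⟨fun heq ↦ hvx.2 (heq ▸ hvy), fun hadj ↦ hwy.1 ?_⟩
          exact hsub hvx.1 ⟨hvw, hxw⟩ ⟨hvy, hadj⟩
        exact hvx.reachable.trans (hxy.reachable.trans hwy.symm.reachable)
      · have hcompl : Gᶜ.Adj v y := ⟨fun heq ↦ hwy.2 (heq ▸ hvw.symm), hvy⟩
        exact hcompl.reachable.trans hwy.symm.reachable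
    · have hcompl : Gᶜ.Adj x w := ⟨fun heq ↦ hvx.2 (heq ▸ hvw), hxw⟩
      exact hvx.reachable.trans hcompl.reachable
  · obtain rfl | hne := eq_or_ne v w
    · exact Reachable.refl v
    · have hcompl : Gᶜ.Adj v w := ⟨hne, hvw⟩
      exact hcompl.reachable

section StronglyRegular

variable {V : Type*} [Fintype V] {G : SimpleGraph V} [DecidableRel G.Adj] {n k μ : ℕ}

theorem adjMatrix_mul_of_one_of_regular {R : Type*} [Semiring R] (hk : G.IsRegularOfDegree k) :
    G.adjMatrix R * of 1 = (k : R) • of 1 := by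
  ext v w
  simp [hk v]

theorem adjMatrix_sq_of_isSRGWith [DecidableEq V] {R : Type*} [Semiring R]
    (h : G.IsSRGWith n k μ μ) (hkμ : (k : R) = μ) : G.adjMatrix R ^ 2 = (μ : R) • of 1 := by
  classical
  rw [h.matrix_eq, ← G.one_add_adjMatrix_add_compl_adjMatrix_eq_of_one R,
    compl_adjMatrix_eq_adjMatrix_compl, smul_add, smul_add, ← hkμ]
  simp only [← Nat.cast_smul_eq_nsmul R, hkμ]

theorem adjMatrix_pow_of_isSRGWith [DecidableEq V] {R : Type*} [CommSemiring R]
    (h : G.IsSRGWith n k μ μ) (hkμ : (k : R) = μ) (m : ℕ) :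
    G.adjMatrix R ^ (m + 2) = (μ : R) ^ (m + 1) • of 1 := by
  induction m with
  | zero => simpa using adjMatrix_sq_of_isSRGWith h hkμ
  | succ m ih =>
    rw [pow_succ', ih, mul_smul_comm, adjMatrix_mul_of_one_of_regular h.regular, hkμ, smul_smul,
      ← pow_succ]

theorem prime_dvd_mul_of_isSRGWith (h : G.IsSRGWith n k μ μ) {p : ℕ} (hp : p.Prime)
    (hkμ : k ≡ μ [MOD p]) : p ∣ μ * n := by
  classical
  have : Fact p.Prime := ⟨hp⟩
  obtain ⟨m, rfl⟩ := Nat.exists_eq_add_of_le' hp.two_le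
  have htrace : (μ : ZMod (m + 2)) ^ (m + 1) * n = 0 := calc
    _ = trace (G.adjMatrix (ZMod (m + 2)) ^ (m + 2)) := by
      rw [adjMatrix_pow_of_isSRGWith h ((ZMod.natCast_eq_natCast_iff _ _ _).mpr hkμ)]
      simp [trace, h.card, mul_comm]
    _ = trace (G.adjMatrix (ZMod (m + 2))) ^ (m + 2) := ZMod.trace_pow_card _
    _ = 0 := by simp
  rw [← ZMod.natCast_eq_zero_iff, Nat.cast_mul]
  simpa using htrace

/-- For `k ≤ 1` the subtraction truncates, and the formula reads `n = k + 1`. -/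
theorem card_eq_of_isSRGWith_one_one [Nonempty V] (h : G.IsSRGWith n k 1 1) :
    n = k * (k - 2) + k + 1 := by
  have hparam : k * (k - 1 - 1) = (n - k - 1) * 1 :=
    h.param_eq G (h.card ▸ Fintype.card_pos)
  have hkn : k < n := by
    obtain ⟨v⟩ := ‹Nonempty V›
    simpa [h.regular v, h.card] using G.degree_lt_card_verts v
  rw [Nat.sub_sub] at hparam
  lia

theorem degree_le_two_of_isSRGWith_one_one [Nonempty V] (h : G.IsSRGWith n k 1 1) : k ≤ 2 := by
  by_contra! hk
  obtain ⟨e, rfl⟩ := Nat.exists_eq_add_of_le' hk.le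
  obtain ⟨p, hp, hpe⟩ := Nat.exists_prime_and_dvd (show e + 1 ≠ 1 by lia)
  have hmod : e + 2 ≡ 1 [MOD p] := (Nat.modEq_zero_iff_dvd.mpr hpe).add_right 1
  have hpn : p ∣ n := by simpa using prime_dvd_mul_of_isSRGWith h hp hmod
  have hn : n = (e + 1) * (e + 2) + 1 := by
    rw [card_eq_of_isSRGWith_one_one h, Nat.add_sub_cancel]
    ring
  rw [hn, Nat.dvd_add_right (hpe.mul_right _)] at hpn
  exact hp.not_dvd_one hpn

end StronglyRegular

namespace HasPairwiseCommonNeighbors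

variable {V : Type*} [Fintype V] {G : SimpleGraph V} [DecidableRel G.Adj] {k μ : ℕ}

theorem degree_eq_of_not_adj (h : HasPairwiseCommonNeighbors G μ) (hμ : μ ≠ 0) {v w : V}
    (hvw : ¬ G.Adj v w) : G.degree v = G.degree w := by
  classical
  have card_adj_inter (x y : V) (hxy : x ≠ y) :
      #{z ∈ G.neighborFinset y | G.Adj x z} = μ := by
    rw [← h hxy, ← Set.toFinset_card]
    congr 1
    ext z
    simp [mem_commonNeighbors, and_comm]
  refine Nat.eq_of_mul_eq_mul_right (Nat.pos_of_ne_zero hμ)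
    (card_mul_eq_card_mul G.Adj (s := G.neighborFinset v) (t := G.neighborFinset w) ?_ ?_)
  · intro x hx
    exact card_adj_inter x w (by rintro rfl; simp_all)
  · intro y hy
    simpa [bipartiteBelow, G.adj_comm] using
      card_adj_inter y v (by rintro rfl; simp_all [G.adj_comm])

theorem degree_eq_of_preconnected_compl (h : HasPairwiseCommonNeighbors G μ) (hμ : μ ≠ 0)
    (hconn : Gᶜ.Preconnected) (v w : V) : G.degree v = G.degree w := by
  obtain ⟨p⟩ := hconn v w
  induction p with
  | nil => rfl
  | cons hadj _ ih => exact (h.degree_eq_of_not_adj hμ hadj.2).trans ih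

theorem isSRGWith (h : HasPairwiseCommonNeighbors G μ) (hk : G.IsRegularOfDegree k) :
    G.IsSRGWith (Fintype.card V) k μ μ where
  card := rfl
  regular := hk
  of_adj _ _ hvw := h hvw.ne
  of_not_adj _ _ hvw _ := h hvw

theorem exists_isUniversal [Nonempty V] (h : HasPairwiseCommonNeighbors G 1) :
    ∃ v, G.IsUniversal v := by
  classical
  by_contra huniv
  have hsub : Pairwise fun v w ↦ (G.commonNeighbors v w).Subsingleton := fun v w hvw ↦
    Set.subsingleton_coe _ |>.mp (Fintype.card_le_one_iff_subsingleton.mp (h hvw).le)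
  have hconn := preconnected_compl_of_subsingleton_commonNeighbors hsub huniv
  obtain ⟨v⟩ := ‹Nonempty V›
  have hsrg : G.IsSRGWith (Fintype.card V) (G.degree v) 1 1 :=
    h.isSRGWith fun w ↦ h.degree_eq_of_preconnected_compl one_ne_zero hconn w v
  have hcard : Fintype.card V = G.degree v + 1 := by
    have : Nonempty V := ⟨v⟩
    simpa [Nat.sub_eq_zero_of_le (degree_le_two_of_isSRGWith_one_one hsrg)] using
      card_eq_of_isSRGWith_one_one hsrg
  exact huniv ⟨v, (G.degree_eq_card_sub_one v).mp (by lia)⟩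

end HasPairwiseCommonNeighbors

namespace C4Free

variable {V : Type} {G : SimpleGraph V}

theorem subsingleton_commonNeighbors (hG : C4Free G) {v w : V} (hvw : v ≠ w) :
    (G.commonNeighbors v w).Subsingleton := by
  rintro x ⟨hvx, hwx⟩ y ⟨hvy, hwy⟩
  by_contra hxy
  exact hG ⟨v, x, w, y, hvx.ne, hvw, hvy.ne, hwx.ne', hxy, hwy.ne, hvx, hwx.symm, hwy, hvy.symm⟩

theorem hasPairwiseCommonNeighbors_one [Fintype V] [DecidableRel G.Adj] (hG : C4Free G)
    (hne : Pairwise fun v w ↦ (G.commonNeighbors v w).Nonempty) :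
    HasPairwiseCommonNeighbors G 1 := by
  intro v w hvw
  have := (hne hvw).to_subtype
  have := (hG.subsingleton_commonNeighbors hvw).coe_sort
  exact le_antisymm (Fintype.card_le_one_iff_subsingleton.mpr this) Fintype.card_pos

end C4Free

/-- A finite nonempty `C₄`-free graph of diameter at most `2` with no dominating vertex
has an edge not contained in any triangle. -/
theorem exists_edge_not_in_triangle {V : Type} [Fintype V] [Nonempty V]
    (A : SimpleGraph V) (hC4 : C4Free A)
    (hdiam : ∀ x y : V, x ≠ y → A.Adj x y ∨ ∃ z : V, A.Adj x z ∧ A.Adj z y)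
    (hdom : ¬ ∃ v : V, ∀ w : V, w ≠ v → A.Adj v w) :
    ∃ x y : V, A.Adj x y ∧ ∀ z : V, ¬ (A.Adj z x ∧ A.Adj z y) := by
  classical
  by_contra! htriangle
  have hne : Pairwise fun v w ↦ (A.commonNeighbors v w).Nonempty := by
    intro v w hvw
    rcases hdiam v w hvw with hadj | ⟨z, hvz, hzw⟩
    · obtain ⟨z, hzv, hzw⟩ := htriangle v w hadj
      exact ⟨z, hzv.symm, hzw.symm⟩
    · exact ⟨z, hvz, hzw.symm⟩
  obtain ⟨v, hv⟩ := (hC4.hasPairwiseCommonNeighbors_one hne).exists_isUniversal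
  exact hdom ⟨v, fun w hwv ↦ hv hwv.symm⟩
end

section
/- The class K(C4) of all finite C4-free graphs does not have the weak amalgamation property. -/
open SimpleGraph

/-!
Let `A` be a disjoint union of three stars with four leaves each, embedded in a finite `C₄`-free
graph `A'`. In a `C₄`-free graph two distinct vertices have at most one common neighbor, so any
amalgam over `A` also identifies all vertices obtained from `A` by repeatedly taking common
neighbors in `A'`; a maximal set `S` of vertices that is always identified is thus closed under
common neighbors. If any two vertices of `S` had a common neighbor, `S` would induce a friendship
graph, and by the friendship theorem some vertex would be equal or adjacent to all others, which is
impossible as it would have to dominate three stars. So some `x ≠ y` in `S` have no common neighbor,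
and two leaves `a`, `b` of one star lie outside the closed neighborhoods of `x` and `y`.

Add a vertex `w` adjacent to `x` and `y`, and then a vertex `u` adjacent to `w` and `a`. Pairwise,
`u`, `w`, `b` have no common neighbor, and they are still identified in every amalgam. Adding a
vertex adjacent to `u` and `w` only, or to all of `u`, `w`, `b`, therefore gives two `C₄`-free
extensions that cannot be amalgamated.
-/

section CommonNeighbors

variable {V : Type} {G : SimpleGraph V}

theorem c4Free_iff_subsingleton_commonNeighbors :
    C4Free G ↔ ∀ ⦃x y : V⦄, x ≠ y → (G.commonNeighbors x y).Subsingleton := by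
  refine ⟨fun hG x y hxy z hz w hw ↦ ?_, ?_⟩
  · by_contra hzw
    exact hG ⟨x, z, y, w, hz.1.ne, hxy, hw.1.ne, hz.2.ne', hzw, hw.2.ne, hz.1, hz.2.symm, hw.2,
      hw.1.symm⟩
  · rintro hG ⟨a, b, c, d, -, hac, -, -, hbd, -, hab, hbc, hcd, hda⟩
    exact hbd (hG hac ⟨hab, hbc.symm⟩ ⟨hda.symm, hcd⟩)

theorem C4Free.subsingleton_commonNeighbors_s8 (hG : C4Free G) {x y : V} (hxy : x ≠ y) :
    (G.commonNeighbors x y).Subsingleton :=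
  c4Free_iff_subsingleton_commonNeighbors.mp hG hxy

end CommonNeighbors

/-- Friendship graphs: any two distinct vertices have exactly one common neighbor. -/
def IsFriendshipGraph {V : Type*} (G : SimpleGraph V) : Prop :=
  ∀ ⦃x y : V⦄, x ≠ y → ∃ z, G.commonNeighbors x y = {z}

section Friendship

open Matrix

variable {V : Type*} {G : SimpleGraph V}

section Fintype

variable [Fintype V] [DecidableRel G.Adj]

theorem IsFriendshipGraph.card_commonNeighbors (hG : IsFriendshipGraph G) {x y : V} (hxy : x ≠ y) :
    Fintype.card (G.commonNeighbors x y) = 1 := by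
  obtain ⟨z, hz⟩ := hG hxy
  rw [← Nat.card_eq_fintype_card, hz, Nat.card_unique]

theorem IsFriendshipGraph.adjMatrix_sq_apply [DecidableEq V] (hG : IsFriendshipGraph G) {x y : V}
    (hxy : x ≠ y) : (G.adjMatrix ℕ ^ 2) x y = 1 := by
  rw [adjMatrix_pow_apply_eq_card_walk, Nat.cast_id, ← hG.card_commonNeighbors hxy]
  exact Fintype.card_congr (G.walkLengthTwoEquivCommonNeighbors x y)

-- Both degrees count the walks of length three from `x` to `y`.
theorem IsFriendshipGraph.degree_eq_of_not_adj (hG : IsFriendshipGraph G) {x y : V}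
    (hxy : ¬ G.Adj x y) : G.degree x = G.degree y := by
  classical
  have hx : ∀ z ∈ G.neighborFinset x, (G.adjMatrix ℕ ^ 2) z y = 1 := fun z hz ↦
    hG.adjMatrix_sq_apply fun hzy ↦ hxy (hzy ▸ (G.mem_neighborFinset x z).mp hz)
  have hy : ∀ z ∈ G.neighborFinset y, (G.adjMatrix ℕ ^ 2) x z = 1 := fun z hz ↦
    hG.adjMatrix_sq_apply fun hxz ↦ hxy (hxz ▸ ((G.mem_neighborFinset y z).mp hz).symm)
  calc
    G.degree x = (G.adjMatrix ℕ * G.adjMatrix ℕ ^ 2) x y := by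
      rw [adjMatrix_mul_apply, Finset.sum_congr rfl hx, Finset.sum_const, smul_eq_mul, mul_one,
        card_neighborFinset_eq_degree]
    _ = (G.adjMatrix ℕ ^ 2 * G.adjMatrix ℕ) x y := by rw [← pow_succ, ← pow_succ']
    _ = G.degree y := by
      rw [mul_adjMatrix_apply, Finset.sum_congr rfl hy, Finset.sum_const, smul_eq_mul, mul_one,
        card_neighborFinset_eq_degree]

theorem IsFriendshipGraph.degree_eq_of_forall_not_isUniversal (hG : IsFriendshipGraph G)
    (hU : ∀ v, ¬ G.IsUniversal v) (x y : V) : G.degree x = G.degree y := by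
  by_cases hxy : G.Adj x y
  · obtain ⟨x', hx', hxx'⟩ : ∃ x', x ≠ x' ∧ ¬ G.Adj x x' := by simpa [IsUniversal] using hU x
    obtain ⟨y', hne, hyy'⟩ : ∃ y', y ≠ y' ∧ ¬ G.Adj y y' := by simpa [IsUniversal] using hU y
    by_cases hx'y : G.Adj x' y
    · by_cases hxy' : G.Adj x y'
      · have hx'y' : ¬ G.Adj x' y' := fun h ↦ by
          obtain ⟨z, hz⟩ := hG hx'
          exact hne (hz.subset ⟨hxy, hx'y⟩ |>.trans (hz.subset ⟨hxy', h⟩).symm)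
        rw [hG.degree_eq_of_not_adj hxx', hG.degree_eq_of_not_adj hx'y',
          hG.degree_eq_of_not_adj hyy']
      · rw [hG.degree_eq_of_not_adj hxy', hG.degree_eq_of_not_adj hyy']
    · rw [hG.degree_eq_of_not_adj hxx', hG.degree_eq_of_not_adj hx'y]
  · exact hG.degree_eq_of_not_adj hxy

theorem IsFriendshipGraph.isSRGWith (hG : IsFriendshipGraph G) {d : ℕ}
    (hd : G.IsRegularOfDegree d) : G.IsSRGWith (Fintype.card V) d 1 1 where
  card := rfl
  regular := hd
  of_adj _ _ h := hG.card_commonNeighbors h.ne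
  of_not_adj _ _ h _ := hG.card_commonNeighbors h

theorem adjMatrix_pow_eq_of_one_of_isSRGWith [DecidableEq V] {R : Type*} [Semiring R]
    {n d : ℕ} (h : G.IsSRGWith n d 1 1) (hd : (d : R) = 1) {k : ℕ} (hk : 2 ≤ k) :
    G.adjMatrix R ^ k = of 1 := by
  induction k, hk using Nat.le_induction with
  | base =>
    rw [h.matrix_eq, ← Nat.cast_smul_eq_nsmul R d, hd]
    ext x y
    by_cases hxy : x = y <;> by_cases hadj : G.Adj x y <;> simp [hxy, hadj]
  | succ k _ ih =>
    ext x y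
    simp [pow_succ, ih, h.regular.degree_eq, hd]

-- For a prime `p` dividing `d - 1`, the trace of `A ^ p` modulo `p` is both `(tr A) ^ p = 0` and
-- `tr J = n = 1`.
theorem degree_le_two_of_isSRGWith {n d : ℕ} (h : G.IsSRGWith n d 1 1) (hn : 0 < n) : d ≤ 2 := by
  classical
  by_contra! hd
  obtain ⟨k, rfl⟩ : ∃ k, d = k + 2 := Nat.exists_eq_add_of_le' hd.le
  have hcard : n = (k + 2) * (k + 1) + 1 := by
    have := IsSRGWith.param_eq G h hn
    grind
  obtain ⟨p, hp, hpk⟩ := Nat.exists_prime_and_dvd (n := k + 1) (by lia)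
  have : Fact p.Prime := ⟨hp⟩
  have hk : (k : ZMod p) + 1 = 0 := by exact_mod_cast (ZMod.natCast_eq_zero_iff _ _).mpr hpk
  have hd1 : ((k + 2 : ℕ) : ZMod p) = 1 := by push_cast; linear_combination hk
  have hn1 : (n : ZMod p) = 1 := by simp [hcard, hk]
  have htrace := ZMod.trace_pow_card (G.adjMatrix (ZMod p))
  rw [adjMatrix_pow_eq_of_one_of_isSRGWith h hd1 hp.two_le, trace_adjMatrix,
    zero_pow hp.ne_zero] at htrace
  simp [Matrix.trace, h.card, hn1] at htrace

end Fintype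

theorem IsFriendshipGraph.exists_isUniversal [Finite V] [Nonempty V] (hG : IsFriendshipGraph G) :
    ∃ v, G.IsUniversal v := by
  classical
  have := Fintype.ofFinite V
  by_contra! hU
  obtain ⟨v⟩ := ‹Nonempty V›
  have hsrg := hG.isSRGWith fun x ↦ hG.degree_eq_of_forall_not_isUniversal hU x v
  have hparam := IsSRGWith.param_eq G hsrg Fintype.card_pos
  have hdeg := degree_le_two_of_isSRGWith hsrg Fintype.card_pos
  have hcompl : Gᶜ.degree v = 0 := by
    rw [hsrg.regular.compl.degree_eq, Nat.sub_right_comm, ← mul_one (_ - _), ← hparam]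
    exact mul_eq_zero_of_right _ (by lia)
  exact hU v (isIsolated_compl_iff_isUniversal.mp ((Gᶜ.degree_eq_zero v).mp hcompl))

end Friendship

/-- The vertex set `S` of `G` is amalgamated within `P`: any two finite extensions of `G` in the
class `P` have a common extension in `P` in which their copies of `S` coincide. With `S` the image
of `A`, this is the condition that weak amalgamation imposes on `A' = G`. -/
def AmalgamatesOver (P : ∀ α : Type, SimpleGraph α → Prop) {V : Type*} (G : SimpleGraph V)
    (S : Set V) : Prop :=
  ∀ (γ : Type) [Fintype γ], ∀ B : SimpleGraph γ, P γ B →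
    ∀ (δ : Type) [Fintype δ], ∀ C : SimpleGraph δ, P δ C →
      ∀ (f : G ↪g B) (g : G ↪g C),
        ∃ (ε : Type) (_ : Fintype ε) (D : SimpleGraph ε), P ε D ∧
          ∃ (f' : B ↪g D) (g' : C ↪g D), ∀ s ∈ S, f' (f s) = g' (g s)

namespace AmalgamatesOver

theorem image {P : ∀ α : Type, SimpleGraph α → Prop} {V W : Type*} {G : SimpleGraph V}
    {H : SimpleGraph W} {S : Set V} (h : AmalgamatesOver P G S) (e : G ↪g H) :
    AmalgamatesOver P H (e '' S) := by
  intro γ _ B hB δ _ C hC f g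
  simpa [Set.forall_mem_image] using h γ B hB δ C hC (f.comp e) (g.comp e)

theorem insert_of_mem_commonNeighbors {V : Type*} {G : SimpleGraph V} {S : Set V}
    (h : AmalgamatesOver @C4Free G S) {x y z : V} (hx : x ∈ S) (hy : y ∈ S) (hxy : x ≠ y)
    (hz : z ∈ G.commonNeighbors x y) : AmalgamatesOver @C4Free G (insert z S) := by
  intro γ _ B hB δ _ C hC f g
  obtain ⟨ε, hε, D, hD, f', g', hfg⟩ := h γ B hB δ C hC f g
  refine ⟨ε, hε, D, hD, f', g', Set.forall_mem_insert.mpr ⟨?_, hfg⟩⟩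
  have hne : f' (f x) ≠ f' (f y) := by simpa using hxy
  refine hD.subsingleton_commonNeighbors_s8 hne ?_ ?_
  · simpa [mem_commonNeighbors] using hz
  · rw [hfg x hx, hfg y hy]
    simpa [mem_commonNeighbors] using hz

end AmalgamatesOver

/-- The graph obtained from `G` by adding a new vertex `none` with neighborhood `T`. -/
def adjoinVertex {V : Type*} (G : SimpleGraph V) (T : Set V) : SimpleGraph (Option V) where
  Adj
    | none, none => False
    | none, some b => b ∈ T
    | some a, none => a ∈ T
    | some a, some b => G.Adj a b
  symm := ⟨by rintro (_ | a) (_ | b) h <;> first | exact h | exact SimpleGraph.Adj.symm h⟩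
  loopless := ⟨by rintro (_ | a) h <;> first | exact h | exact G.irrefl h⟩

section AdjoinVertex

variable {V : Type*} {G : SimpleGraph V} {T : Set V}

@[simp]
theorem adjoinVertex_adj_none_some {a : V} : (adjoinVertex G T).Adj none (some a) ↔ a ∈ T := Iff.rfl

@[simp]
theorem adjoinVertex_adj_some_none {a : V} : (adjoinVertex G T).Adj (some a) none ↔ a ∈ T := Iff.rfl

@[simp]
theorem adjoinVertex_adj_some_some {a b : V} :
    (adjoinVertex G T).Adj (some a) (some b) ↔ G.Adj a b := Iff.rfl

variable (G T) in
/-- The inclusion of a graph into its extension by a new vertex. -/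
@[simps]
def adjoinVertexEmbedding : G ↪g adjoinVertex G T where
  toFun := some
  inj' := Option.some_injective V
  map_rel_iff' := Iff.rfl

theorem commonNeighbors_adjoinVertex_none_some (a : V) :
    (adjoinVertex G T).commonNeighbors none (some a) = some '' (T ∩ G.neighborSet a) := by
  ext (_ | z) <;> simp [mem_commonNeighbors]

theorem commonNeighbors_adjoinVertex_pair_none_some_eq_empty {x y a : V} (hax : ¬ G.Adj a x)
    (hay : ¬ G.Adj a y) : (adjoinVertex G {x, y}).commonNeighbors none (some a) = ∅ := by
  rw [commonNeighbors_adjoinVertex_none_some, Set.image_eq_empty, Set.eq_empty_iff_forall_notMem]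
  rintro z ⟨rfl | rfl, hz⟩
  · exact hax hz
  · exact hay hz

theorem commonNeighbors_adjoinVertex_some_some {a b : V} (hab : ¬ (a ∈ T ∧ b ∈ T)) :
    (adjoinVertex G T).commonNeighbors (some a) (some b) = some '' G.commonNeighbors a b := by
  ext (_ | z) <;> simp [mem_commonNeighbors, hab]

end AdjoinVertex

theorem AmalgamatesOver.adjoinVertex {V : Type*} {G : SimpleGraph V} {S : Set V}
    (h : AmalgamatesOver @C4Free G S) {x y : V} (hx : x ∈ S) (hy : y ∈ S) (hxy : x ≠ y) :
    AmalgamatesOver @C4Free (adjoinVertex G {x, y}) (insert none (some '' S)) :=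
  (h.image (adjoinVertexEmbedding G {x, y})).insert_of_mem_commonNeighbors
    (Set.mem_image_of_mem _ hx) (Set.mem_image_of_mem _ hy) (by simpa using hxy)
    (by simp [mem_commonNeighbors])

section NoCommonNeighbors

variable {V : Type} {G : SimpleGraph V}

theorem c4Free_adjoinVertex (hG : C4Free G) {T : Set V}
    (hT : T.Pairwise fun a b ↦ G.commonNeighbors a b = ∅) : C4Free (adjoinVertex G T) := by
  have hnone (a : V) : ((adjoinVertex G T).commonNeighbors none (some a)).Subsingleton := by
    rw [commonNeighbors_adjoinVertex_none_some]
    refine Set.Subsingleton.image (fun b hb c hc ↦ ?_) _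
    by_contra hbc
    exact (hT hb.1 hc.1 hbc).subset ⟨hb.2.symm, hc.2.symm⟩
  refine c4Free_iff_subsingleton_commonNeighbors.mpr ?_
  rintro (_ | a) (_ | b) hab
  · exact absurd rfl hab
  · exact hnone b
  · rw [commonNeighbors_symm]
    exact hnone a
  · have hab : a ≠ b := fun h ↦ hab (congrArg some h)
    by_cases hmem : a ∈ T ∧ b ∈ T
    · have hnew : (adjoinVertex G T).commonNeighbors (some a) (some b) ⊆ {none} := by
        rintro (_ | z) hz
        · rfl
        · exact ((hT hmem.1 hmem.2 hab).subset hz).elim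
      exact Set.subsingleton_singleton.anti hnew
    · rw [commonNeighbors_adjoinVertex_some_some hmem]
      exact (hG.subsingleton_commonNeighbors_s8 hab).image _

theorem c4Free_adjoinVertex_pair (hG : C4Free G) {x y : V} (hxy : G.commonNeighbors x y = ∅) :
    C4Free (adjoinVertex G {x, y}) := by
  refine c4Free_adjoinVertex hG (Set.pairwise_pair.mpr fun _ ↦ ⟨hxy, ?_⟩)
  rwa [commonNeighbors_symm]

-- The new common neighbor of `x` and `y` is determined by `x` and `y`, but it is adjacent to `z` in
-- only one of the two extensions.
theorem not_amalgamatesOver_of_triple [Finite V] (hG : C4Free G) {S : Set V} {x y z : V}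
    (hx : x ∈ S) (hy : y ∈ S) (hz : z ∈ S) (hxy : x ≠ y) (hxz : x ≠ z) (hyz : y ≠ z)
    (hGxy : G.commonNeighbors x y = ∅) (hGxz : G.commonNeighbors x z = ∅)
    (hGyz : G.commonNeighbors y z = ∅) : ¬ AmalgamatesOver @C4Free G S := by
  have := Fintype.ofFinite V
  intro h
  have hB : C4Free (adjoinVertex G {x, y}) := c4Free_adjoinVertex_pair hG hGxy
  have hC : C4Free (adjoinVertex G {x, y, z}) := by
    refine c4Free_adjoinVertex hG ?_
    simp [Set.pairwise_insert, hGxy, hGxz, hGyz, G.commonNeighbors_symm y x,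
      G.commonNeighbors_symm z x, G.commonNeighbors_symm z y]
  obtain ⟨ε, -, D, hD, f, g, hfg⟩ := h _ _ hB _ _ hC
    (adjoinVertexEmbedding G {x, y}) (adjoinVertexEmbedding G {x, y, z})
  simp only [adjoinVertexEmbedding_apply] at hfg
  have hnew : f none = g none := by
    have hne : f (some x) ≠ f (some y) := by simpa using hxy
    refine hD.subsingleton_commonNeighbors_s8 hne ?_ ?_
    · simp [mem_commonNeighbors]
    · simp [mem_commonNeighbors, hfg x hx, hfg y hy]
  have hadj : D.Adj (f none) (f (some z)) := by
    rw [hnew, hfg z hz]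
    simp
  simp [hxz.symm, hyz.symm] at hadj

end NoCommonNeighbors

/-- The closed neighborhood of `x`: the vertex `x` together with its neighbors. -/
def closedNeighborSet {V : Type*} (G : SimpleGraph V) (x : V) : Set V :=
  insert x (G.neighborSet x)

theorem not_amalgamatesOver_of_far_pair {V : Type} [Finite V] {G : SimpleGraph V} (hG : C4Free G)
    {S : Set V} {x y a b : V} (hx : x ∈ S) (hy : y ∈ S) (ha : a ∈ S) (hb : b ∈ S) (hxy : x ≠ y)
    (hGxy : G.commonNeighbors x y = ∅) (hab : a ≠ b) (hGab : ¬ G.Adj a b)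
    (ha' : a ∉ closedNeighborSet G x ∪ closedNeighborSet G y)
    (hb' : b ∉ closedNeighborSet G x ∪ closedNeighborSet G y) :
    ¬ AmalgamatesOver @C4Free G S := by
  intro h
  have hfar {c : V} (hc : c ∉ closedNeighborSet G x ∪ closedNeighborSet G y) :
      (adjoinVertex G {x, y}).commonNeighbors none (some c) = ∅ :=
    commonNeighbors_adjoinVertex_pair_none_some_eq_empty (fun h ↦ hc (.inl (.inr h.symm)))
      fun h ↦ hc (.inr (.inr h.symm))
  have hne {c : V} (hc : c ∉ closedNeighborSet G x ∪ closedNeighborSet G y) : c ≠ x ∧ c ≠ y :=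
    ⟨fun h ↦ hc (.inl (.inl h)), fun h ↦ hc (.inr (.inl h))⟩
  let G₁ := adjoinVertex G {x, y}
  let w : Option V := none
  have hG₁ : C4Free G₁ := c4Free_adjoinVertex_pair hG hGxy
  have hG₂ : C4Free (adjoinVertex G₁ {w, some a}) := c4Free_adjoinVertex_pair hG₁ (hfar ha')
  have h₂ := (h.adjoinVertex hx hy hxy).adjoinVertex (x := w) (y := some a)
    (by simp [w]) (by simp [ha]) (by simp [w])
  refine not_amalgamatesOver_of_triple hG₂ (x := none) (y := some w) (z := some (some b))
    (by simp) (by simp [w]) (by simp [hb]) (by simp) (by simp) (by simp [w]) ?_ ?_ ?_ h₂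
  · exact commonNeighbors_adjoinVertex_pair_none_some_eq_empty G₁.irrefl
      (by simp [G₁, w, hne ha'])
  · exact commonNeighbors_adjoinVertex_pair_none_some_eq_empty (by simp [G₁, w, hne hb'])
      fun h ↦ hGab (G.adj_symm h)
  · rw [commonNeighbors_adjoinVertex_some_some (by simp [w, hab.symm]), hfar hb', Set.image_empty]

section Stars

/-- The disjoint union of stars indexed by `ι`, each with center `none` and leaves indexed by `κ`.
It is written as a box product with an edgeless graph. -/
abbrev disjointStars (ι κ : Type*) : SimpleGraph (ι × Option κ) :=
  (⊥ : SimpleGraph ι) □ starGraph (none : Option κ)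

theorem c4Free_starGraph {V : Type} (r : V) : C4Free (starGraph r) := by
  rintro ⟨a, b, c, d, -, hac, -, -, hbd, -, hab, hbc, hcd, hda⟩
  simp only [starGraph_adj] at hab hbc hcd hda
  grind

theorem C4Free.bot_boxProd {V : Type} {G : SimpleGraph V} (hG : C4Free G) (ι : Type) :
    C4Free ((⊥ : SimpleGraph ι) □ G) := by
  refine c4Free_iff_subsingleton_commonNeighbors.mpr ?_
  rintro ⟨i, a⟩ ⟨j, b⟩ hne ⟨k, c⟩ hc ⟨l, d⟩ hd
  simp only [mem_commonNeighbors, boxProd_adj, bot_adj, false_and, false_or] at hc hd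
  obtain ⟨⟨hac, rfl⟩, hbc, rfl⟩ := hc
  obtain ⟨⟨had, rfl⟩, hbd, -⟩ := hd
  have hab : a ≠ b := fun h ↦ hne (congrArg _ h)
  exact congrArg _ (hG.subsingleton_commonNeighbors_s8 hab ⟨hac, hbc⟩ ⟨had, hbd⟩)

theorem C4Free.subsingleton_inter_closedNeighborSet {V : Type} {G : SimpleGraph V} (hG : C4Free G)
    {c x : V} {s : Set V} (hs : G.IsIndepSet s) (hsc : s ⊆ G.neighborSet c) (hcx : c ≠ x) :
    (s ∩ closedNeighborSet G x).Subsingleton := by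
  rintro a ⟨ha, hxa⟩ b ⟨hb, hxb⟩
  by_contra hab
  rcases hxa with rfl | hxa <;> rcases hxb with rfl | hxb
  · exact hab rfl
  · exact hs ha hb hab hxb
  · exact hs hb ha (Ne.symm hab) hxa
  · exact hab (hG.subsingleton_commonNeighbors_s8 hcx ⟨hsc ha, hxa⟩ ⟨hsc hb, hxb⟩)

theorem C4Free.nontrivial_sdiff_closedNeighborSet {V : Type} {G : SimpleGraph V} (hG : C4Free G)
    {c x y : V} {s : Set V} (hs : G.IsIndepSet s) (hsc : s ⊆ G.neighborSet c) (hcx : c ≠ x)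
    (hcy : c ≠ y) (hcard : 4 ≤ s.encard) :
    (s \ (closedNeighborSet G x ∪ closedNeighborSet G y)).Nontrivial := by
  rw [← Set.not_subsingleton_iff, ← Set.encard_le_one_iff_subsingleton]
  intro hle
  have hx := Set.encard_le_one_iff_subsingleton.mpr
    (hG.subsingleton_inter_closedNeighborSet hs hsc hcx)
  have hy := Set.encard_le_one_iff_subsingleton.mpr
    (hG.subsingleton_inter_closedNeighborSet hs hsc hcy)
  have : s.encard ≤ 3 := calc
    s.encard = (s \ (closedNeighborSet G x ∪ closedNeighborSet G y) ∪
        (s ∩ closedNeighborSet G x ∪ s ∩ closedNeighborSet G y)).encard := by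
      rw [← Set.inter_union_distrib_left, Set.sdiff_union_inter]
    _ ≤ 1 + (1 + 1) := (Set.encard_union_le _ _).trans
      (add_le_add hle ((Set.encard_union_le _ _).trans (add_le_add hx hy)))
    _ = 3 := by norm_num
  exact absurd (hcard.trans this) (by norm_num)

theorem C4Free.exists_far_pair {V : Type} {G : SimpleGraph V} (hG : C4Free G)
    (e : disjointStars (Fin 3) (Fin 4) ↪g G) (x y : V) :
    ∃ a ∈ Set.range e, ∃ b ∈ Set.range e, a ≠ b ∧ ¬ G.Adj a b ∧
      a ∉ closedNeighborSet G x ∪ closedNeighborSet G y ∧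
      b ∉ closedNeighborSet G x ∪ closedNeighborSet G y := by
  obtain ⟨i, hix, hiy⟩ : ∃ i, e (i, none) ≠ x ∧ e (i, none) ≠ y := by
    classical
    have hinj : Function.Injective fun i ↦ e (i, none) := fun i j h ↦ by simpa using h
    have hcard : ({x, y} : Finset V).card < (Finset.univ.image fun i ↦ e (i, none)).card := by
      rw [Finset.card_image_of_injective _ hinj, Finset.card_fin]
      exact Nat.lt_succ_of_le Finset.card_le_two
    simpa using Finset.exists_mem_notMem_of_card_lt_card hcard
  let leaf (k : Fin 4) : V := e (i, some k)
  have hinj : Function.Injective leaf := fun k l h ↦ by simpa [leaf] using h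
  have hindep : G.IsIndepSet (Set.range leaf) := by
    rintro _ ⟨k, rfl⟩ _ ⟨l, rfl⟩ -
    simp [leaf, boxProd_adj]
  have hcenter : Set.range leaf ⊆ G.neighborSet (e (i, none)) := by
    rintro _ ⟨k, rfl⟩
    simp [leaf, boxProd_adj]
  have hcard : 4 ≤ (Set.range leaf).encard := by
    simp [← Set.image_univ, hinj.encard_image]
  obtain ⟨a, ⟨⟨k, rfl⟩, ha⟩, b, ⟨⟨l, rfl⟩, hb⟩, hab⟩ :=
    hG.nontrivial_sdiff_closedNeighborSet hindep hcenter hix hiy hcard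
  exact ⟨_, ⟨_, rfl⟩, _, ⟨_, rfl⟩, hab, hindep ⟨k, rfl⟩ ⟨l, rfl⟩ hab, ha, hb⟩

end Stars

theorem exists_commonNeighbors_eq_empty {V : Type} [Finite V] {G : SimpleGraph V} (hG : C4Free G)
    (e : disjointStars (Fin 3) (Fin 4) ↪g G) {S : Set V} (he : Set.range e ⊆ S)
    (hS : ∀ x ∈ S, ∀ y ∈ S, x ≠ y → G.commonNeighbors x y ⊆ S) :
    ∃ x ∈ S, ∃ y ∈ S, x ≠ y ∧ G.commonNeighbors x y = ∅ := by
  by_contra! hne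
  have hfriend : IsFriendshipGraph (G.induce S) := by
    rintro ⟨x, hx⟩ ⟨y, hy⟩ hxy
    have hxy : x ≠ y := fun h ↦ hxy (Subtype.ext h)
    obtain ⟨z, hz⟩ := hne x hx y hy hxy
    refine ⟨⟨z, hS x hx y hy hxy hz⟩, Set.eq_singleton_iff_unique_mem.mpr ⟨hz, fun w hw ↦ ?_⟩⟩
    exact Subtype.ext (hG.subsingleton_commonNeighbors_s8 hxy hw hz)
  have : Nonempty S := ⟨e (0, none), he ⟨_, rfl⟩⟩
  obtain ⟨p, hp⟩ := hfriend.exists_isUniversal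
  obtain ⟨a, ha, -, -, -, -, hap, -⟩ := hG.exists_far_pair e p p
  refine hap (.inl ?_)
  by_cases h : p = ⟨a, he ha⟩
  · exact .inl (congrArg Subtype.val h.symm)
  · exact .inr (hp h)

theorem not_amalgamatesOver_range {V : Type} [Finite V] {G : SimpleGraph V} (hG : C4Free G)
    (e : disjointStars (Fin 3) (Fin 4) ↪g G) : ¬ AmalgamatesOver @C4Free G (Set.range e) := by
  intro h
  obtain ⟨S, heS, hS⟩ := Set.Finite.exists_le_maximal
    (s := {S : Set V | AmalgamatesOver @C4Free G S}) (Set.toFinite _) h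
  have hclosed : ∀ x ∈ S, ∀ y ∈ S, x ≠ y → G.commonNeighbors x y ⊆ S := fun x hx y hy hxy z hz ↦
    hS.le_of_ge (hS.prop.insert_of_mem_commonNeighbors hx hy hxy hz) (Set.subset_insert z S)
      (Set.mem_insert z S)
  obtain ⟨x, hx, y, hy, hxy, hempty⟩ := exists_commonNeighbors_eq_empty hG e heS hclosed
  obtain ⟨a, ha, b, hb, hab, hadj, ha', hb'⟩ := hG.exists_far_pair e x y
  exact not_amalgamatesOver_of_far_pair hG hx hy (heS ha) (heS hb) hxy hempty hab hadj ha' hb'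
    hS.prop

/-- The class of all finite `C₄`-free graphs does not have the weak amalgamation property. -/
theorem c4Free_not_wap : ¬ GraphWAP (fun _ G => C4Free G) := by
  intro h
  obtain ⟨β, _, G, e, hG, he⟩ :=
    h _ (disjointStars (Fin 3) (Fin 4)) ((c4Free_starGraph _).bot_boxProd _)
  refine not_amalgamatesOver_range hG e ?_
  simpa only [AmalgamatesOver, Set.forall_mem_range] using he
end

section
/- Let the bowtie be the graph consisting of two triangles sharing exactly one common vertex. The class K(bowtie) of all finite bowtie-free graphs has the weak amalgamation property. -/
open SimpleGraph

/-- The bowtie graph: two triangles sharing the common vertex `0`,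
with triangles `{0,1,2}` and `{0,3,4}`. -/
def bowtie : SimpleGraph (Fin 5) :=
  SimpleGraph.fromRel fun a b =>
    a = 0 ∨ (a = 1 ∧ b = 2) ∨ (a = 3 ∧ b = 4)

/-!
Amalgamate two bowtie-free graphs `B` and `C` freely over a common induced subgraph `A'`. A bowtie
of the amalgam consists of a triangle of `B` and a triangle of `C` which meet only in a vertex `a`
of `A'`. This cannot happen if `a` lies in a diamond (two triangles sharing an edge) of `A'`:
two triangles at a vertex of a bowtie-free graph share a further vertex, and the diamond leaves so
little choice for these vertices that the two given triangles share a further vertex of `A'`.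

It remains to extend a bowtie-free graph so that every vertex lies in a diamond. If `v` is not in a
diamond, then either `v` is in no triangle or the only triangle through `v` has no edge in common
with any other triangle. In both cases `v` lies in a clique `S` containing all triangles which meet
it, and amalgamating with `K₄` freely over `S` creates no bowtie.
-/

universe u v w

variable {U : Type u} {V : Type v} {W : Type w}

/-- The vertices `a`, `b`, `c` form a triangle of `G`. Often `a` is regarded as the apex of the
triangle and `bc` as an edge in the link of `a`. -/
structure IsTriangle (G : SimpleGraph V) (a b c : V) : Prop where
  adj₁₂ : G.Adj a b
  adj₁₃ : G.Adj a c
  adj₂₃ : G.Adj b c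

namespace IsTriangle

variable {G : SimpleGraph V} {a b c : V}

theorem swap (h : IsTriangle G a b c) : IsTriangle G a c b :=
  ⟨h.adj₁₃, h.adj₁₂, h.adj₂₃.symm⟩

theorem rotate (h : IsTriangle G a b c) : IsTriangle G b c a :=
  ⟨h.adj₂₃, h.adj₁₂.symm, h.adj₁₃.symm⟩

theorem map_iff {H : SimpleGraph W} (f : G ↪g H) :
    IsTriangle H (f a) (f b) (f c) ↔ IsTriangle G a b c := by
  constructor <;> rintro ⟨hab, hac, hbc⟩
  · exact ⟨f.map_adj_iff.1 hab, f.map_adj_iff.1 hac, f.map_adj_iff.1 hbc⟩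
  · exact ⟨f.map_adj_iff.2 hab, f.map_adj_iff.2 hac, f.map_adj_iff.2 hbc⟩

theorem map {H : SimpleGraph W} (h : IsTriangle G a b c) (f : G ↪g H) :
    IsTriangle H (f a) (f b) (f c) :=
  (map_iff f).2 h

end IsTriangle

/-- Bowtie-freeness in terms of links: two triangles with a common vertex `a` share a further
vertex. See `not_contains_bowtie_iff` for the equivalence with omitting `bowtie`. -/
def BowtieFree (G : SimpleGraph V) : Prop :=
  ∀ ⦃a p q r s⦄, IsTriangle G a p q → IsTriangle G a r s → ∃ z, z ∈ s(p, q) ∧ z ∈ s(r, s)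

theorem contains_bowtie {V : Type} {G : SimpleGraph V} {a p q r s : V} (hpq : IsTriangle G a p q)
    (hrs : IsTriangle G a r s) (hdisj : ∀ z ∈ s(p, q), z ∉ s(r, s)) : Contains bowtie G := by
  obtain ⟨hap, haq, hpq⟩ := hpq
  obtain ⟨har, has, hrs⟩ := hrs
  simp only [Sym2.mem_iff, not_or, forall_eq_or_imp, forall_eq] at hdisj
  refine ⟨⟨![a, p, q, r, s], fun {i j} hij => ?_⟩, fun i j hij => ?_⟩
  · fin_cases i <;> fin_cases j <;> simp_all [bowtie, G.adj_comm]
  · have := hap.ne; have := haq.ne; have := hpq.ne; have := har.ne; have := has.ne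
    have := hrs.ne
    fin_cases i <;> fin_cases j <;> simp_all

theorem not_contains_bowtie_iff {V : Type} {G : SimpleGraph V} :
    ¬ Contains bowtie G ↔ BowtieFree G := by
  constructor
  · intro h a p q r s hpq hrs
    by_contra! hdisj
    exact h (contains_bowtie hpq hrs hdisj)
  · rintro hG ⟨f, hf⟩
    have hadj {i j} (hij : bowtie.Adj i j) : G.Adj (f i) (f j) := f.map_adj hij
    have h₁₂ : IsTriangle G (f 0) (f 1) (f 2) := by constructor <;> apply hadj <;> simp [bowtie]
    have h₃₄ : IsTriangle G (f 0) (f 3) (f 4) := by constructor <;> apply hadj <;> simp [bowtie]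
    simpa [hf.eq_iff] using hG h₁₂ h₃₄

theorem BowtieFree.mem_or_mem {G : SimpleGraph V} (hG : BowtieFree G) {a p q r s : V}
    (hpq : IsTriangle G a p q) (hrs : IsTriangle G a r s) : p ∈ s(r, s) ∨ q ∈ s(r, s) := by
  obtain ⟨z, hz, hz'⟩ := hG hpq hrs
  obtain rfl | rfl := Sym2.mem_iff.1 hz
  · exact Or.inl hz'
  · exact Or.inr hz'

theorem bowtieFree_top_fin_four : BowtieFree (⊤ : SimpleGraph (Fin 4)) := by
  rintro a p q r s ⟨hap, haq, hpq⟩ ⟨har, has, hrs⟩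
  simp only [top_adj] at hap haq hpq har has hrs
  have : p = r ∨ p = s ∨ q = r ∨ q = s := by omega
  rcases this with rfl | rfl | rfl | rfl <;> simp

section FreeAmalgam

/-- The right-hand map into the pushout of two injections `f : U → V` and `g : U → W`, where the
pushout is realised as `V` together with the points of `W` outside the range of `g`. The left-hand
map is `Sum.inl`. -/
noncomputable def glue (f : U ↪ V) (g : U ↪ W) : W ↪ V ⊕ ↥(Set.range g)ᶜ :=
  open Classical in
  (((Equiv.ofInjective g g.injective).sumCongr (Equiv.refl _)).trans
    (Equiv.Set.sumCompl (Set.range g))).symm.toEmbedding.trans (f.sumMap (.refl _))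

theorem glue_apply (f : U ↪ V) (g : U ↪ W) (a : U) : glue f g (g a) = Sum.inl (f a) := by
  classical
  simp [glue, Equiv.Set.sumCompl_symm_apply_of_mem (Set.mem_range_self a)]

theorem glue_of_notMem (f : U ↪ V) (g : U ↪ W) (c : ↥(Set.range g)ᶜ) :
    glue f g c = Sum.inr c := by
  classical
  simp [glue]

theorem exists_of_inl_eq_glue {f : U ↪ V} {g : U ↪ W} {b : V} {c : W}
    (h : Sum.inl b = glue f g c) : ∃ a, f a = b ∧ g a = c := by
  by_cases hc : c ∈ Set.range g
  · obtain ⟨a, rfl⟩ := hc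
    exact ⟨a, (Sum.inl_injective (h.trans (glue_apply f g a))).symm, rfl⟩
  · cases h.trans (glue_of_notMem f g ⟨c, hc⟩)

variable {A : SimpleGraph U} {B : SimpleGraph V} {C : SimpleGraph W}

/-- The free amalgam of `B` and `C` over `A`: the two graphs are glued along the images of `A`, and
no further edges are added. -/
noncomputable def freeAmalgam (f : A ↪g B) (g : A ↪g C) :
    SimpleGraph (V ⊕ ↥(Set.range g.toEmbedding)ᶜ) :=
  B.map Sum.inl ⊔ C.map (glue f.toEmbedding g.toEmbedding)

namespace freeAmalgam

variable (f : A ↪g B) (g : A ↪g C)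

theorem adj_iff_adj_of_eq_glue {b b' : V} {c c' : W}
    (h : Sum.inl b = glue f.toEmbedding g.toEmbedding c)
    (h' : Sum.inl b' = glue f.toEmbedding g.toEmbedding c') : B.Adj b b' ↔ C.Adj c c' := by
  obtain ⟨a, rfl, rfl⟩ := exists_of_inl_eq_glue h
  obtain ⟨a', rfl, rfl⟩ := exists_of_inl_eq_glue h'
  exact f.map_adj_iff.trans g.map_adj_iff.symm

/-- The embedding of the left factor into the free amalgam. -/
noncomputable def inl : B ↪g freeAmalgam f g where
  toEmbedding := .inl
  map_rel_iff' {b b'} := by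
    refine ⟨?_, fun h => Or.inl ((map_adj .inl B _ _).2 ⟨b, b', h, rfl, rfl⟩)⟩
    rintro (h | h)
    · exact map_adj_apply (f := .inl).1 h
    · obtain ⟨c, c', h, hc, hc'⟩ := (map_adj _ C _ _).1 h
      exact (adj_iff_adj_of_eq_glue f g hc.symm hc'.symm).2 h

/-- The embedding of the right factor into the free amalgam. -/
noncomputable def inr : C ↪g freeAmalgam f g where
  toEmbedding := glue f.toEmbedding g.toEmbedding
  map_rel_iff' {c c'} := by
    refine ⟨?_, fun h => Or.inr ((map_adj _ C _ _).2 ⟨c, c', h, rfl, rfl⟩)⟩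
    rintro (h | h)
    · obtain ⟨b, b', h, hb, hb'⟩ := (map_adj .inl B _ _).1 h
      exact (adj_iff_adj_of_eq_glue f g hb hb').1 h
    · exact map_adj_apply.1 h

theorem inl_apply_eq_inr_apply (a : U) : inl f g (f a) = inr f g (g a) :=
  (glue_apply f.toEmbedding g.toEmbedding a).symm

theorem exists_of_inl_eq_inr {b : V} {c : W} (h : inl f g b = inr f g c) :
    ∃ a, f a = b ∧ g a = c :=
  exists_of_inl_eq_glue h

theorem mem_range_inl_or_mem_range_inr (y : V ⊕ ↥(Set.range g.toEmbedding)ᶜ) :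
    y ∈ Set.range (inl f g) ∨ y ∈ Set.range (inr f g) := by
  rcases y with b | c
  · exact Or.inl ⟨b, rfl⟩
  · exact Or.inr ⟨c, glue_of_notMem _ _ c⟩

theorem mem_range_of_adj {x y : V ⊕ ↥(Set.range g.toEmbedding)ᶜ}
    (h : (freeAmalgam f g).Adj x y) :
    (x ∈ Set.range (inl f g) ∧ y ∈ Set.range (inl f g)) ∨
      (x ∈ Set.range (inr f g) ∧ y ∈ Set.range (inr f g)) := by
  rcases h with h | h
  · obtain ⟨b, b', -, rfl, rfl⟩ := (map_adj .inl B _ _).1 h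
    exact Or.inl ⟨⟨b, rfl⟩, b', rfl⟩
  · obtain ⟨c, c', -, rfl, rfl⟩ := (map_adj _ C _ _).1 h
    exact Or.inr ⟨⟨c, rfl⟩, c', rfl⟩

theorem exists_isTriangle {x y z : V ⊕ ↥(Set.range g.toEmbedding)ᶜ}
    (h : IsTriangle (freeAmalgam f g) x y z) :
    (∃ b p q, IsTriangle B b p q ∧ inl f g b = x ∧ inl f g p = y ∧ inl f g q = z) ∨
      (∃ c p q, IsTriangle C c p q ∧ inr f g c = x ∧ inr f g p = y ∧ inr f g q = z) := by
  have hxy := mem_range_of_adj f g h.adj₁₂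
  have hxz := mem_range_of_adj f g h.adj₁₃
  have hyz := mem_range_of_adj f g h.adj₂₃
  have hrange : (x ∈ Set.range (inl f g) ∧ y ∈ Set.range (inl f g) ∧ z ∈ Set.range (inl f g)) ∨
      (x ∈ Set.range (inr f g) ∧ y ∈ Set.range (inr f g) ∧ z ∈ Set.range (inr f g)) := by
    tauto
  rcases hrange with ⟨⟨b, rfl⟩, ⟨p, rfl⟩, ⟨q, rfl⟩⟩ | ⟨⟨c, rfl⟩, ⟨p, rfl⟩, ⟨q, rfl⟩⟩
  · exact Or.inl ⟨b, p, q, (IsTriangle.map_iff _).1 h, rfl, rfl, rfl⟩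
  · exact Or.inr ⟨c, p, q, (IsTriangle.map_iff _).1 h, rfl, rfl, rfl⟩

theorem bowtieFree (hB : BowtieFree B) (hC : BowtieFree C)
    (hBC : ∀ ⦃a p q r s⦄, IsTriangle B (f a) p q → IsTriangle C (g a) r s →
      ∃ z, f z ∈ s(p, q) ∧ g z ∈ s(r, s)) :
    BowtieFree (freeAmalgam f g) := by
  have hmixed {b c p q r s} (hbc : inl f g b = inr f g c) (hpq : IsTriangle B b p q)
      (hrs : IsTriangle C c r s) :
      ∃ z, z ∈ s(inl f g p, inl f g q) ∧ z ∈ s(inr f g r, inr f g s) := by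
    obtain ⟨a, rfl, rfl⟩ := exists_of_inl_eq_inr f g hbc
    obtain ⟨z, hz, hz'⟩ := hBC hpq hrs
    refine ⟨inl f g (f z), Sym2.mem_map.2 ⟨f z, hz, rfl⟩, ?_⟩
    rw [inl_apply_eq_inr_apply]
    exact Sym2.mem_map.2 ⟨g z, hz', rfl⟩
  intro x p q r s hpq hrs
  rcases exists_isTriangle f g hpq with ⟨b, p, q, hb, rfl, rfl, rfl⟩ |
      ⟨c, p, q, hc, rfl, rfl, rfl⟩ <;>
    rcases exists_isTriangle f g hrs with ⟨b', r, s, hb', hx, rfl, rfl⟩ |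
      ⟨c', r, s, hc', hx, rfl, rfl⟩
  · obtain rfl := (inl f g).injective hx
    obtain ⟨z, hz, hz'⟩ := hB hb hb'
    exact ⟨inl f g z, Sym2.mem_map.2 ⟨z, hz, rfl⟩, Sym2.mem_map.2 ⟨z, hz', rfl⟩⟩
  · exact hmixed hx.symm hb hc'
  · obtain ⟨z, hz, hz'⟩ := hmixed hx hb' hc
    exact ⟨z, hz', hz⟩
  · obtain rfl := (inr f g).injective hx
    obtain ⟨z, hz, hz'⟩ := hC hc hc'
    exact ⟨inr f g z, Sym2.mem_map.2 ⟨z, hz, rfl⟩, Sym2.mem_map.2 ⟨z, hz', rfl⟩⟩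

end freeAmalgam

end FreeAmalgam

/-- The vertex `v` lies in a diamond of `G`, that is, in the union of two triangles sharing an edge
(the spine). The diamond need not be induced, so that vertices of a `K₄` are covered. -/
inductive InDiamond (G : SimpleGraph V) (v : V) : Prop
  | spine {w x y : V} (hx : IsTriangle G v w x) (hy : IsTriangle G v w y) (hne : x ≠ y)
  | tip {w x y : V} (hv : IsTriangle G v x y) (hw : IsTriangle G w x y) (hne : v ≠ w)

theorem InDiamond.map {G : SimpleGraph V} {H : SimpleGraph W} {v : V} (h : InDiamond G v)
    (f : G ↪g H) : InDiamond H (f v) := by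
  cases h with
  | spine hx hy hne => exact .spine (hx.map f) (hy.map f) (f.injective.ne hne)
  | tip hv hw hne => exact .tip (hv.map f) (hw.map f) (f.injective.ne hne)

theorem inDiamond_top_fin_four (v : Fin 4) : InDiamond (⊤ : SimpleGraph (Fin 4)) v := by
  have h (i j : Fin 4) (hi : i ≠ 0) (hj : j ≠ 0) (hij : i ≠ j) :
      IsTriangle (⊤ : SimpleGraph (Fin 4)) v (v + i) (v + j) :=
    ⟨by simpa, by simpa, by simpa⟩
  exact .spine (h 1 2 (by decide) (by decide) (by decide))
    (h 1 3 (by decide) (by decide) (by decide)) (by simp)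

section Amalgamation

variable {A : SimpleGraph U} {B : SimpleGraph V} {C : SimpleGraph W} {f : A ↪g B} {g : A ↪g C}

theorem BowtieFree.exists_common_of_eq_map (hC : BowtieFree C) {a x y : U} {p q : V} {r s : W}
    (hpq : IsTriangle B (f a) p q) (hxy : s(p, q) = s(f x, f y)) (hrs : IsTriangle C (g a) r s) :
    ∃ z, f z ∈ s(p, q) ∧ g z ∈ s(r, s) := by
  have haxy : IsTriangle A a x y := by
    rcases Sym2.eq_iff.1 hxy with ⟨rfl, rfl⟩ | ⟨rfl, rfl⟩
    · exact (IsTriangle.map_iff f).1 hpq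
    · exact (IsTriangle.map_iff f).1 hpq.swap
  rcases hC.mem_or_mem (haxy.map g) hrs with hx | hy
  · exact ⟨x, by simp [hxy], hx⟩
  · exact ⟨y, by simp [hxy], hy⟩

theorem BowtieFree.mem_or_eq_of_spine {G : SimpleGraph V} (hG : BowtieFree G) {a w x y p q : V}
    (hx : IsTriangle G a w x) (hy : IsTriangle G a w y) (hne : x ≠ y)
    (hpq : IsTriangle G a p q) : w ∈ s(p, q) ∨ s(p, q) = s(x, y) :=
  or_iff_not_imp_left.2 fun hw => (Sym2.mem_and_mem_iff hne).1
    ⟨(hG.mem_or_mem hx hpq).resolve_left hw, (hG.mem_or_mem hy hpq).resolve_left hw⟩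

theorem BowtieFree.exists_common_of_spine (hB : BowtieFree B) (hC : BowtieFree C)
    {a w x y : U} {p q : V} {r s : W} (hx : IsTriangle A a w x) (hy : IsTriangle A a w y)
    (hne : x ≠ y) (hpq : IsTriangle B (f a) p q) (hrs : IsTriangle C (g a) r s) :
    ∃ z, f z ∈ s(p, q) ∧ g z ∈ s(r, s) := by
  rcases hC.mem_or_eq_of_spine (hx.map g) (hy.map g) (g.injective.ne hne) hrs with hrw | hrxy
  · rcases hB.mem_or_eq_of_spine (hx.map f) (hy.map f) (f.injective.ne hne) hpq with hpw | hpxy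
    · exact ⟨w, hpw, hrw⟩
    · exact hC.exists_common_of_eq_map hpq hpxy hrs
  · obtain ⟨z, hz, hz'⟩ := hB.exists_common_of_eq_map hrs hrxy hpq
    exact ⟨z, hz', hz⟩

theorem BowtieFree.eq_of_tip {G : SimpleGraph V} (hG : BowtieFree G) {a w x y p q : V}
    (ha : IsTriangle G a x y) (hw : IsTriangle G w x y) (hne : a ≠ w) (haw : ¬ G.Adj a w)
    (hpq : IsTriangle G a p q) : s(p, q) = s(x, y) := by
  have hthird {x y r} (ha : IsTriangle G a x y) (hw : IsTriangle G w x y)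
      (hr : IsTriangle G a x r) : r = y := by
    have hr_ne_w : r ≠ w := fun h => haw (h ▸ hr.adj₁₃)
    rcases hG.mem_or_mem hr.rotate hw.rotate with h | h
    · exact (Sym2.mem_iff.1 h).resolve_right hr_ne_w
    · exact absurd (Sym2.mem_iff.1 h) (not_or.2 ⟨ha.adj₁₃.ne, hne⟩)
  have hmem {x y} (ha : IsTriangle G a x y) (hw : IsTriangle G w x y) (hx : x ∈ s(p, q)) :
      y ∈ s(p, q) := by
    rcases Sym2.mem_iff.1 hx with rfl | rfl
    · simp [hthird ha hw hpq]
    · simp [hthird ha hw hpq.swap]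
  refine (Sym2.mem_and_mem_iff ha.adj₂₃.ne).1 ?_
  rcases hG.mem_or_mem ha hpq with hx | hy
  · exact ⟨hx, hmem ha hw hx⟩
  · exact ⟨hmem ha.swap hw.swap hy, hy⟩

theorem InDiamond.exists_common {a : U} (ha : InDiamond A a) (hB : BowtieFree B) (hC : BowtieFree C)
    {p q : V} {r s : W} (hpq : IsTriangle B (f a) p q) (hrs : IsTriangle C (g a) r s) :
    ∃ z, f z ∈ s(p, q) ∧ g z ∈ s(r, s) := by
  cases ha with
  | spine hx hy hne => exact hB.exists_common_of_spine hC hx hy hne hpq hrs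
  | @tip w x y ha hw hne =>
    by_cases haw : A.Adj a w
    · exact hB.exists_common_of_spine hC ha ⟨ha.adj₁₂, haw, hw.adj₁₂.symm⟩ hw.adj₁₃.ne' hpq hrs
    · have hpxy : s(p, q) = s(f x, f y) :=
        hB.eq_of_tip (ha.map f) (hw.map f) (f.injective.ne hne) (by simpa using haw) hpq
      exact hC.exists_common_of_eq_map hpq hpxy hrs

end Amalgamation

section Extension

variable {G : SimpleGraph V}

theorem BowtieFree.exists_extension_of_isClique [Finite V] (hG : BowtieFree G) {S : Finset V}
    (hS : G.IsClique S) (hcard : S.card ≤ 4)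
    (hclosed : ∀ a ∈ S, ∀ p q, IsTriangle G a p q → p ∈ S ∧ q ∈ S) :
    ∃ (W : Type v) (_ : Finite W) (H : SimpleGraph W) (i : G ↪g H), BowtieFree H ∧
      (∀ a ∈ S, InDiamond H (i a)) ∧ ∀ w, w ∈ Set.range i ∨ InDiamond H w := by
  obtain ⟨e⟩ : Nonempty (S ↪ Fin 4) := Function.Embedding.nonempty_of_card_le (by simpa)
  let f : G.induce (S : Set V) ↪g G := Embedding.induce _
  let g : G.induce (S : Set V) ↪g (⊤ : SimpleGraph (Fin 4)) :=
    ⟨e, by simp [induce_eq_top.2 hS]⟩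
  have hinr (k : Fin 4) : InDiamond (freeAmalgam f g) (freeAmalgam.inr f g k) :=
    (inDiamond_top_fin_four k).map _
  refine ⟨_, inferInstance, freeAmalgam f g, freeAmalgam.inl f g, ?_, fun a ha => ?_, fun w => ?_⟩
  · refine freeAmalgam.bowtieFree f g hG bowtieFree_top_fin_four fun a p q r s hpq hrs => ?_
    obtain ⟨hp, hq⟩ := hclosed a a.2 p q hpq
    have hpqS : s(p, q) = s(f ⟨p, hp⟩, f ⟨q, hq⟩) := rfl
    exact bowtieFree_top_fin_four.exists_common_of_eq_map hpq hpqS hrs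
  · exact freeAmalgam.inl_apply_eq_inr_apply f g ⟨a, ha⟩ ▸ hinr _
  · rcases freeAmalgam.mem_range_inl_or_mem_range_inr f g w with hw | ⟨k, rfl⟩
    · exact Or.inl hw
    · exact Or.inr (hinr k)

theorem BowtieFree.mem_of_not_inDiamond [DecidableEq V] (hG : BowtieFree G) {v x y a p q : V}
    (hv : ¬ InDiamond G v) (hxy : IsTriangle G v x y) (ha : a ∈ ({v, x, y} : Finset V))
    (hpq : IsTriangle G a p q) :
    p ∈ ({v, x, y} : Finset V) ∧ q ∈ ({v, x, y} : Finset V) := by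
  have hspine {w x y} (hx : IsTriangle G v w x) (hy : IsTriangle G v w y) : x = y :=
    by_contra fun hne => hv (.spine hx hy hne)
  have htip {w x y} (hx : IsTriangle G v x y) (hw : IsTriangle G w x y) : v = w :=
    by_contra fun hne => hv (.tip hx hw hne)
  have hapex {p q} (hpq : IsTriangle G v p q) : s(p, q) = s(x, y) := by
    obtain ⟨z, hz, hz'⟩ := hG hpq hxy
    rcases Sym2.mem_iff.1 hz with rfl | rfl <;> rcases Sym2.mem_iff.1 hz' with rfl | rfl
    · rw [hspine hxy hpq]
    · rw [hspine hxy.swap hpq, Sym2.eq_swap]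
    · rw [hspine hxy hpq.swap, Sym2.eq_swap]
    · rw [hspine hxy.swap hpq.swap]
  have hbase {x y p q} (hxy : IsTriangle G v x y) (hpq : IsTriangle G x p q) :
      s(p, q) = s(v, y) := by
    obtain ⟨z, hz, hz'⟩ := hG hpq hxy.rotate
    rcases Sym2.mem_iff.1 hz with rfl | rfl <;> rcases Sym2.mem_iff.1 hz' with rfl | rfl
    · rw [htip hxy hpq.rotate.rotate, Sym2.eq_swap]
    · rw [hspine hxy hpq.rotate.swap]
    · rw [htip hxy hpq.rotate.swap]
    · rw [hspine hxy hpq.rotate.rotate, Sym2.eq_swap]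
  simp only [Finset.mem_insert, Finset.mem_singleton] at ha ⊢
  rcases ha with rfl | rfl | rfl
  · grind [hapex hpq]
  · grind [hbase hxy hpq]
  · grind [hbase hxy.swap hpq]

theorem BowtieFree.exists_extension_inDiamond [Finite V] (hG : BowtieFree G) {v : V}
    (hv : ¬ InDiamond G v) :
    ∃ (W : Type v) (_ : Finite W) (H : SimpleGraph W) (i : G ↪g H), BowtieFree H ∧
      InDiamond H (i v) ∧ ∀ w, w ∈ Set.range i ∨ InDiamond H w := by
  classical
  suffices ∃ S : Finset V, v ∈ S ∧ G.IsClique S ∧ S.card ≤ 4 ∧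
      ∀ a ∈ S, ∀ p q, IsTriangle G a p q → p ∈ S ∧ q ∈ S by
    obtain ⟨S, hvS, hS, hcard, hclosed⟩ := this
    obtain ⟨W, hW, H, i, hH, hSi, hnew⟩ := hG.exists_extension_of_isClique hS hcard hclosed
    exact ⟨W, hW, H, i, hH, hSi v hvS, hnew⟩
  by_cases h : ∃ x y, IsTriangle G v x y
  · obtain ⟨x, y, hxy⟩ := h
    refine ⟨{v, x, y}, by simp, ?_, Finset.card_le_three.trans (by norm_num),
      fun a ha p q hpq => hG.mem_of_not_inDiamond hv hxy ha hpq⟩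
    exact (is3Clique_triple_iff.2 ⟨hxy.adj₁₂, hxy.adj₁₃, hxy.adj₂₃⟩).isClique
  · push Not at h
    exact ⟨{v}, by simp, by simp, by simp, by simp [h]⟩

theorem BowtieFree.exists_extension_forall_inDiamond [Finite V] (hG : BowtieFree G) :
    ∃ (W : Type v) (_ : Finite W) (H : SimpleGraph W) (_ : G ↪g H), BowtieFree H ∧
      ∀ w, InDiamond H w := by
  induction hn : {v | ¬ InDiamond G v}.ncard using Nat.strong_induction_on generalizing V with
  | _ n ih =>
    by_cases hall : ∀ v, InDiamond G v
    · exact ⟨V, inferInstance, G, Embedding.refl, hG, hall⟩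
    push Not at hall
    obtain ⟨v, hv⟩ := hall
    obtain ⟨W, _, H, i, hH, hiv, hnew⟩ := hG.exists_extension_inDiamond hv
    have hssub : {w | ¬ InDiamond H w} ⊂ i '' {u | ¬ InDiamond G u} := by
      refine (Set.ssubset_iff_of_subset fun w hw => ?_).2
        ⟨i v, Set.mem_image_of_mem i hv, not_not.2 hiv⟩
      obtain ⟨u, rfl⟩ := (hnew w).resolve_right hw
      exact ⟨u, fun hu => hw (hu.map i), rfl⟩
    have hlt : {w | ¬ InDiamond H w}.ncard < n :=
      (Set.ncard_lt_ncard hssub).trans_eq ((Set.ncard_image_of_injective _ i.injective).trans hn)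
    obtain ⟨X, hX, K, j, hK, hall⟩ := ih _ hlt hH rfl
    exact ⟨X, hX, K, j.comp i, hK, hall⟩

end Extension

/-- The class of all finite bowtie-free graphs has the weak amalgamation property. -/
theorem bowtieFree_wap :
    GraphWAP (fun _ G => ¬ Contains bowtie G) := by
  simp only [GraphWAP, not_contains_bowtie_iff]
  intro α _ A hA
  obtain ⟨β, _, A', i, hA', hdiamond⟩ := hA.exists_extension_forall_inDiamond
  refine ⟨β, Fintype.ofFinite β, A', i, hA', fun γ _ B hB δ _ C hC f g => ?_⟩
  refine ⟨_, Fintype.ofFinite _, freeAmalgam f g, ?_, freeAmalgam.inl f g, freeAmalgam.inr f g,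
    fun a => freeAmalgam.inl_apply_eq_inr_apply f g (i a)⟩
  exact freeAmalgam.bowtieFree f g hB hC fun a _ _ _ _ hpq hrs =>
    (hdiamond a).exists_common hB hC hpq hrs
end
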